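/- arXiv:2201.05534 — 3 statements merged into one kernel-verified Lean document; each statement's English description precedes it below -/
import Mathlib

section
/- For α ∈ [1/2,1), a density operator ρ_AB, and any density operator η_B, tr((η_B^{-α'/2}(σ_AB + ε P_AB)η_B^{-α'/2})^α) ≤ 2^{(1-α)H̃_α^↑(A|B)_ρ} + ε^α d_A^{1-α}, whenever σ_AB + ε P_AB = ρ_AB + ε Q_AB with P_AB, Q_AB density operators and ε > 0. -/
open Matrix MeasureTheory
open scoped Kronecker ComplexOrder

noncomputable def mpow {n : Type*} [Fintype n] [DecidableEq n]
    (A : Matrix n n ℂ) (p : ℝ) : Matrix n n ℂ :=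
  if hA : A.IsHermitian then
    (hA.eigenvectorUnitary : Matrix n n ℂ) *
      Matrix.diagonal (fun i => ((hA.eigenvalues i ^ p : ℝ) : ℂ)) *
      (star (hA.eigenvectorUnitary : Matrix n n ℂ))
  else 0

noncomputable def traceNorm {n : Type*} [Fintype n] [DecidableEq n]
    (A : Matrix n n ℂ) : ℝ :=
  (mpow (Aᴴ * A) (1/2)).trace.re

def IsDensity {n : Type*} [Fintype n] [DecidableEq n] (ρ : Matrix n n ℂ) : Prop :=
  ρ.PosSemidef ∧ ρ.trace = 1

noncomputable def sandTr {a b : Type*} [Fintype a] [DecidableEq a] [Fintype b] [DecidableEq b]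
    (α : ℝ) (ρ : Matrix (a × b) (a × b) ℂ) (η : Matrix b b ℂ) : ℝ :=
  (mpow (((1 : Matrix a a ℂ) ⊗ₖ mpow η ((1 - α)/(2*α))) * ρ *
      ((1 : Matrix a a ℂ) ⊗ₖ mpow η ((1 - α)/(2*α)))) α).trace.re

noncomputable def Hcond {a b : Type*} [Fintype a] [DecidableEq a] [Fintype b] [DecidableEq b]
    (α : ℝ) (ρ : Matrix (a × b) (a × b) ℂ) : ℝ :=
  ⨆ η : {η : Matrix b b ℂ // IsDensity η}, (1/(1-α)) * Real.logb 2 (sandTr α ρ η)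

section helpers

variable {n : Type*} [Fintype n] [DecidableEq n]

lemma dg_entry (Z : Matrix n n ℂ) (γ : n → ℝ) (j : n) :
    (Zᴴ * Matrix.diagonal (fun i => ((γ i : ℝ) : ℂ)) * Z) j j
      = ((∑ i, ‖Z i j‖ ^ 2 * γ i : ℝ) : ℂ) := by
  rw [Matrix.mul_apply]
  push_cast
  refine Finset.sum_congr rfl fun i _ => ?_
  rw [Matrix.mul_diagonal, Matrix.conjTranspose_apply, ← Complex.conj_mul', ← starRingEnd_apply]
  ring

lemma gram_entry (Z : Matrix n n ℂ) (j : n) :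
    (Zᴴ * Z) j j = ((∑ i, ‖Z i j‖ ^ 2 : ℝ) : ℂ) := by
  have h := dg_entry Z (fun _ => 1) j
  simpa using h

/-- functional calculus through the eigenbasis -/
noncomputable def mfn {A : Matrix n n ℂ} (hA : A.IsHermitian) (f : ℝ → ℝ) : Matrix n n ℂ :=
  (hA.eigenvectorUnitary : Matrix n n ℂ) *
      Matrix.diagonal (fun i => ((f (hA.eigenvalues i) : ℝ) : ℂ)) *
      (hA.eigenvectorUnitary : Matrix n n ℂ)ᴴ

lemma mpow_eq_mfn {A : Matrix n n ℂ} (hA : A.IsHermitian) (p : ℝ) :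
    mpow A p = mfn hA (fun x => x ^ p) := by
  rw [mpow, dif_pos hA]; rfl

lemma U_left {A : Matrix n n ℂ} (hA : A.IsHermitian) :
    (hA.eigenvectorUnitary : Matrix n n ℂ)ᴴ * (hA.eigenvectorUnitary : Matrix n n ℂ) = 1 :=
  Unitary.coe_star_mul_self hA.eigenvectorUnitary

lemma U_right {A : Matrix n n ℂ} (hA : A.IsHermitian) :
    (hA.eigenvectorUnitary : Matrix n n ℂ) * (hA.eigenvectorUnitary : Matrix n n ℂ)ᴴ = 1 :=
  Unitary.coe_mul_star_self hA.eigenvectorUnitary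

lemma mfn_congr {A : Matrix n n ℂ} (hA : A.PosSemidef) {f g : ℝ → ℝ}
    (h : ∀ x, 0 ≤ x → f x = g x) : mfn hA.1 f = mfn hA.1 g := by
  unfold mfn
  congr 3
  funext i
  rw [h _ (hA.eigenvalues_nonneg i)]

lemma mfn_id {A : Matrix n n ℂ} (hA : A.IsHermitian) : mfn hA (fun x => x) = A := by
  conv_rhs => rw [hA.spectral_theorem]
  rw [Unitary.conjStarAlgAut_apply]
  rfl

lemma mfn_one {A : Matrix n n ℂ} (hA : A.IsHermitian) : mfn hA (fun _ => 1) = 1 := by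
  simp [mfn, U_right hA]

lemma mfn_mul {A : Matrix n n ℂ} (hA : A.IsHermitian) (f g : ℝ → ℝ) :
    mfn hA f * mfn hA g = mfn hA (fun x => f x * g x) := by
  unfold mfn
  set U := (hA.eigenvectorUnitary : Matrix n n ℂ)
  have : U * diagonal (fun i => ((f (hA.eigenvalues i) : ℝ) : ℂ)) * Uᴴ *
      (U * diagonal (fun i => ((g (hA.eigenvalues i) : ℝ) : ℂ)) * Uᴴ)
      = U * (diagonal (fun i => ((f (hA.eigenvalues i) : ℝ) : ℂ)) * (Uᴴ * U) *
      diagonal (fun i => ((g (hA.eigenvalues i) : ℝ) : ℂ))) * Uᴴ := by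
    simp only [Matrix.mul_assoc]
  rw [this, U_left hA, Matrix.mul_one, diagonal_mul_diagonal]
  simp

lemma mfn_sub {A : Matrix n n ℂ} (hA : A.IsHermitian) (f g : ℝ → ℝ) :
    mfn hA f - mfn hA g = mfn hA (fun x => f x - g x) := by
  unfold mfn
  rw [← Matrix.sub_mul, ← Matrix.mul_sub, diagonal_sub]
  simp

lemma mfn_herm {A : Matrix n n ℂ} (hA : A.IsHermitian) (f : ℝ → ℝ) :
    (mfn hA f)ᴴ = mfn hA f := by
  unfold mfn
  simp only [conjTranspose_mul, conjTranspose_conjTranspose, diagonal_conjTranspose,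
    Matrix.mul_assoc]
  congr 3
  funext i
  simp

lemma mfn_trace {A : Matrix n n ℂ} (hA : A.IsHermitian) (f : ℝ → ℝ) :
    (mfn hA f).trace = ((∑ i, f (hA.eigenvalues i) : ℝ) : ℂ) := by
  unfold mfn
  rw [Matrix.trace_mul_comm, ← Matrix.mul_assoc, U_left hA, Matrix.one_mul, Matrix.trace_diagonal]
  push_cast
  rfl

lemma mfn_psd {A : Matrix n n ℂ} (hA : A.PosSemidef) (f : ℝ → ℝ) (h : ∀ x, 0 ≤ x → 0 ≤ f x) :
    (mfn hA.1 f).PosSemidef := by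
  unfold mfn
  refine Matrix.PosSemidef.mul_mul_conjTranspose_same ?_ _
  rw [Matrix.posSemidef_diagonal_iff]
  intro i
  exact_mod_cast h _ (hA.eigenvalues_nonneg i)

lemma mpow_trace {A : Matrix n n ℂ} (hA : A.IsHermitian) (p : ℝ) :
    (mpow A p).trace.re = ∑ i, hA.eigenvalues i ^ p := by
  rw [mpow_eq_mfn hA, mfn_trace hA, Complex.ofReal_re]

lemma contr_entry (Z : Matrix n n ℂ) (h : (1 - Z * Zᴴ).PosSemidef) (j : n) :
    ∑ i, ‖Z i j‖ ^ 2 ≤ 1 := by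
  have h2 := h.conjTranspose_mul_mul_same Z
  have h3 : Zᴴ * (1 - Z * Zᴴ) * Z = Zᴴ * Z - (Zᴴ * Z)ᴴ * (Zᴴ * Z) := by
    simp only [conjTranspose_mul, conjTranspose_conjTranspose]
    noncomm_ring
  rw [h3] at h2
  have h4 := h2.diag_nonneg (i := j)
  rw [Matrix.sub_apply, gram_entry (Zᴴ * Z) j, gram_entry Z j] at h4
  have h5 : ∑ i, ‖(Zᴴ * Z) i j‖ ^ 2 ≤ ∑ i, ‖Z i j‖ ^ 2 := by
    rw [← Complex.ofReal_sub] at h4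
    have := Complex.zero_le_real.mp h4
    linarith
  have h6 : ‖(Zᴴ * Z) j j‖ ^ 2 ≤ ∑ i, ‖(Zᴴ * Z) i j‖ ^ 2 :=
    Finset.single_le_sum (f := fun i => ‖(Zᴴ * Z) i j‖ ^ 2) (fun i _ => by positivity)
      (Finset.mem_univ j)
  rw [gram_entry Z j, Complex.norm_real, Real.norm_eq_abs, sq_abs] at h6
  nlinarith

lemma jensen_sub (p γ : n → ℝ) (hp : ∀ i, 0 ≤ p i) (hγ : ∀ i, 0 ≤ γ i) (hs : ∑ i, p i ≤ 1)
    (α : ℝ) (h0 : 0 < α) (h1 : α < 1) :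
    ∑ i, p i * γ i ^ α ≤ (∑ i, p i * γ i) ^ α := by
  have hc : (1 / (1 - α)).HolderConjugate (1 / α) := by
    rw [Real.holderConjugate_iff]
    have : 0 < 1 - α := by linarith
    refine ⟨by rw [lt_div_iff₀ this]; linarith, by field_simp; ring⟩
  have h := Real.inner_le_Lp_mul_Lq_of_nonneg Finset.univ hc
    (f := fun i => p i ^ (1 - α)) (g := fun i => (p i * γ i) ^ α)
    (fun i _ => Real.rpow_nonneg (hp i) _)
    (fun i _ => Real.rpow_nonneg (mul_nonneg (hp i) (hγ i)) _)
  have e1 : ∀ i, (p i ^ (1 - α)) ^ (1 / (1 - α)) = p i := fun i => by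
    rw [← Real.rpow_mul (hp i), mul_one_div_cancel (by linarith), Real.rpow_one]
  have e2 : ∀ i, ((p i * γ i) ^ α) ^ (1 / α) = p i * γ i := fun i => by
    rw [← Real.rpow_mul (mul_nonneg (hp i) (hγ i)), mul_one_div_cancel (by linarith), Real.rpow_one]
  have e3 : ∀ i, p i ^ (1 - α) * (p i * γ i) ^ α = p i * γ i ^ α := fun i => by
    rw [Real.mul_rpow (hp i) (hγ i), ← mul_assoc, ← Real.rpow_add' (hp i) (by norm_num)]
    simp
  simp only [e1, e2, e3, one_div_one_div] at h
  refine h.trans ?_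
  have hm : 0 ≤ (∑ i, p i * γ i) ^ α :=
    Real.rpow_nonneg (Finset.sum_nonneg fun i _ => mul_nonneg (hp i) (hγ i)) _
  have : (∑ i, p i) ^ (1 - α) ≤ 1 :=
    Real.rpow_le_one (Finset.sum_nonneg fun i _ => hp i) hs (by linarith)
  nlinarith

/-- one half of the McCarthy inequality -/
lemma half_mccarthy {A C : Matrix n n ℂ} (hA : A.PosSemidef) (hC : C.PosSemidef)
    (X : Matrix n n ℂ) (hX : (1 - Xᴴ * X).PosSemidef) (hAX : X * C * Xᴴ = A)
    (α : ℝ) (h0 : 0 < α) (h1 : α < 1) :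
    (X * mpow C α * Xᴴ).trace.re ≤ (mpow A α).trace.re := by
  rw [mpow_trace hA.1]
  set V := (hA.1.eigenvectorUnitary : Matrix n n ℂ) with hV
  set U := (hC.1.eigenvectorUnitary : Matrix n n ℂ) with hU
  set Z := Uᴴ * Xᴴ * V with hZ
  have hZh : Zᴴ = Vᴴ * X * U := by
    simp [hZ, conjTranspose_mul, Matrix.mul_assoc]
  have key : ∀ f : ℝ → ℝ, Vᴴ * (X * mfn hC.1 f * Xᴴ) * V
      = Zᴴ * diagonal (fun i => ((f (hC.1.eigenvalues i) : ℝ) : ℂ)) * Z := by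
    intro f
    rw [hZh, hZ, mfn]
    simp only [Matrix.mul_assoc]
    rfl
  have hev : ∀ j, hA.1.eigenvalues j = ∑ i, ‖Z i j‖ ^ 2 * hC.1.eigenvalues i := by
    intro j
    have e := dg_entry Z hC.1.eigenvalues j
    rw [← key (fun x => x), mfn_id, hAX] at e
    have e2 : Vᴴ * A * V = diagonal (fun i => ((hA.1.eigenvalues i : ℝ) : ℂ)) := by
      conv_lhs => rw [← mfn_id hA.1]
      unfold mfn
      rw [← hV]
      calc Vᴴ * (V * diagonal (fun i => ((hA.1.eigenvalues i : ℝ) : ℂ)) * Vᴴ) * V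
          = (Vᴴ * V) * diagonal (fun i => ((hA.1.eigenvalues i : ℝ) : ℂ)) * (Vᴴ * V) := by
            simp only [Matrix.mul_assoc]
        _ = _ := by rw [hV, U_left hA.1]; simp
    rw [e2, diagonal_apply_eq] at e
    exact_mod_cast e
  have hcon : ∀ j, ∑ i, ‖Z i j‖ ^ 2 ≤ 1 := by
    apply contr_entry
    have : 1 - Z * Zᴴ = Uᴴ * (1 - Xᴴ * X) * U := by
      rw [Matrix.mul_sub, Matrix.sub_mul, Matrix.mul_one, hU, U_left hC.1, hZh, hZ, ← hU]
      congr 1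
      calc Uᴴ * Xᴴ * V * (Vᴴ * X * U) = Uᴴ * Xᴴ * (V * Vᴴ) * X * U := by
            simp only [Matrix.mul_assoc]
        _ = _ := by rw [hV, U_right hA.1]; simp only [Matrix.mul_assoc, Matrix.one_mul]
    rw [this]
    exact hX.conjTranspose_mul_mul_same U
  have htr : (X * mpow C α * Xᴴ).trace
      = (Vᴴ * (X * mfn hC.1 (fun x => x ^ α) * Xᴴ) * V).trace := by
    rw [Matrix.trace_mul_comm (Vᴴ * _), ← Matrix.mul_assoc, hV, U_right hA.1, Matrix.one_mul,
      mpow_eq_mfn hC.1]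
  rw [htr, key, Matrix.trace, Complex.re_sum]
  refine Finset.sum_le_sum fun j _ => ?_
  rw [diag_apply, dg_entry Z (fun i => hC.1.eigenvalues i ^ α) j, Complex.ofReal_re, hev j]
  exact jensen_sub _ _ (fun i => by positivity) hC.eigenvalues_nonneg (hcon j) α h0 h1

lemma supp_zero {A B N : Matrix n n ℂ} (hA : A.PosSemidef) (hB : B.PosSemidef) (hN : Nᴴ = N)
    (h : (A + B) * N = 0) : mfn hA.1 (fun x => x ^ (1/2 : ℝ)) * N = 0 := by
  set R := mfn hA.1 (fun x => x ^ (1/2 : ℝ)) with hR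
  have hRR : R * R = A := by
    rw [hR, mfn_mul]
    conv_rhs => rw [← mfn_id hA.1]
    apply mfn_congr hA
    intro x hx
    rw [← Real.rpow_add' hx (by norm_num)]; norm_num
  have hRh : Rᴴ = R := mfn_herm _ _
  rw [← Matrix.trace_conjTranspose_mul_self_eq_zero_iff]
  have e1 : (R * N)ᴴ * (R * N) = Nᴴ * A * N := by
    rw [conjTranspose_mul, hRh, ← hRR]; simp only [Matrix.mul_assoc]
  rw [e1]
  have t1 := (hA.conjTranspose_mul_mul_same N).trace_nonneg
  have t2 := (hB.conjTranspose_mul_mul_same N).trace_nonneg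
  have t3 : (Nᴴ * A * N).trace + (Nᴴ * B * N).trace = 0 := by
    rw [← Matrix.trace_add, ← Matrix.add_mul, ← Matrix.mul_add, Matrix.mul_assoc, h]
    simp
  exact ((add_eq_zero_iff_of_nonneg t1 t2).mp t3).1

set_option maxHeartbeats 1600000 in
lemma mccarthy {A B : Matrix n n ℂ} (hA : A.PosSemidef) (hB : B.PosSemidef)
    (α : ℝ) (h0 : 0 < α) (h1 : α < 1) :
    (mpow (A + B) α).trace.re ≤ (mpow A α).trace.re + (mpow B α).trace.re := by
  have hC : (A + B).PosSemidef := hA.add hB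
  have sq : ∀ {D : Matrix n n ℂ} (hD : D.PosSemidef),
      mfn hD.1 (fun x => x ^ (1/2 : ℝ)) * mfn hD.1 (fun x => x ^ (1/2 : ℝ)) = D := by
    intro D hD
    rw [mfn_mul]
    conv_rhs => rw [← mfn_id hD.1]
    apply mfn_congr hD
    intro x hx
    rw [← Real.rpow_add' hx (by norm_num)]; norm_num
  set Ci := mfn hC.1 (fun x => x ^ (-1/2 : ℝ)) with hCi
  set Pi := mfn hC.1 (fun x => x ^ (-1/2 : ℝ) * x * x ^ (-1/2 : ℝ)) with hPi
  have hCih : Ciᴴ = Ci := mfn_herm _ _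
  have p0 : ∀ x : ℝ, 0 ≤ x → x ^ (-1/2 : ℝ) * x * x ^ (-1/2 : ℝ) = if x = 0 then 0 else 1 := by
    intro x hx
    split_ifs with h
    · simp [h]
    · have hx' : 0 < x := lt_of_le_of_ne hx (Ne.symm h)
      nth_rewrite 2 [← Real.rpow_one x]
      rw [← Real.rpow_add hx', ← Real.rpow_add hx']; norm_num
  have hPiC : Ci * (A + B) * Ci = Pi := by
    conv_lhs => rw [← mfn_id hC.1]
    rw [hCi, mfn_mul, mfn_mul]
  have hPiC2 : Ci * (A + B) * Ciᴴ = Pi := by rw [hCih, hPiC]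
  have h1Pi : 1 - Pi = mfn hC.1 (fun x => 1 - x ^ (-1/2 : ℝ) * x * x ^ (-1/2 : ℝ)) := by
    rw [hPi, ← mfn_one hC.1, mfn_sub]
  have h1Pipsd : (1 - Pi).PosSemidef := by
    rw [h1Pi]
    apply mfn_psd hC
    intro x hx
    rw [p0 x hx]; split_ifs <;> norm_num
  have hN : (A + B) * (1 - Pi) = 0 := by
    rw [h1Pi]
    conv_lhs => enter [1]; rw [← mfn_id hC.1]
    rw [mfn_mul]
    have : mfn hC.1 (fun _ => 0) = 0 := by simp [mfn]
    rw [← this]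
    apply mfn_congr hC
    intro x hx
    rw [p0 x hx]; split_ifs with h <;> simp [h]
  set RA := mfn hA.1 (fun x => x ^ (1/2 : ℝ)) with hRA
  set RB := mfn hB.1 (fun x => x ^ (1/2 : ℝ)) with hRB
  have hRAh : RAᴴ = RA := mfn_herm _ _
  have hRBh : RBᴴ = RB := mfn_herm _ _
  have sA : RA * Pi = RA := by
    have := supp_zero hA hB h1Pipsd.1 hN
    rw [Matrix.mul_sub, Matrix.mul_one, sub_eq_zero] at this
    exact this.symm
  have sB : RB * Pi = RB := by
    have := supp_zero hB hA h1Pipsd.1 (by rw [add_comm]; exact hN)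
    rw [Matrix.mul_sub, Matrix.mul_one, sub_eq_zero] at this
    exact this.symm
  have gX : (RA * Ci)ᴴ * (RA * Ci) = Ci * A * Ci := by
    rw [conjTranspose_mul, hRAh, hCih, ← sq hA]; simp only [Matrix.mul_assoc]; rfl
  have gY : (RB * Ci)ᴴ * (RB * Ci) = Ci * B * Ci := by
    rw [conjTranspose_mul, hRBh, hCih, ← sq hB]; simp only [Matrix.mul_assoc]; rfl
  have gsum : Ci * A * Ci + Ci * B * Ci = Pi := by
    rw [← hPiC]; noncomm_ring
  have cX : (1 - (RA * Ci)ᴴ * (RA * Ci)).PosSemidef := by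
    have : 1 - (RA * Ci)ᴴ * (RA * Ci) = (1 - Pi) + (RB * Ci)ᴴ * (RB * Ci) := by
      rw [gX, gY, ← gsum]; abel
    rw [this]
    exact h1Pipsd.add (Matrix.posSemidef_conjTranspose_mul_self _)
  have cY : (1 - (RB * Ci)ᴴ * (RB * Ci)).PosSemidef := by
    have : 1 - (RB * Ci)ᴴ * (RB * Ci) = (1 - Pi) + (RA * Ci)ᴴ * (RA * Ci) := by
      rw [gX, gY, ← gsum]; abel
    rw [this]
    exact h1Pipsd.add (Matrix.posSemidef_conjTranspose_mul_self _)
  have aX : (RA * Ci) * (A + B) * (RA * Ci)ᴴ = A := by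
    calc (RA * Ci) * (A + B) * (RA * Ci)ᴴ = RA * (Ci * (A + B) * Ciᴴ) * RAᴴ := by
          rw [conjTranspose_mul]; simp only [Matrix.mul_assoc]
      _ = A := by rw [hPiC2, sA, hRAh, sq hA]
  have aY : (RB * Ci) * (A + B) * (RB * Ci)ᴴ = B := by
    calc (RB * Ci) * (A + B) * (RB * Ci)ᴴ = RB * (Ci * (A + B) * Ciᴴ) * RBᴴ := by
          rw [conjTranspose_mul]; simp only [Matrix.mul_assoc]
      _ = B := by rw [hPiC2, sB, hRBh, sq hB]
  have q1 := half_mccarthy hA hC _ cX aX α h0 h1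
  have q2 := half_mccarthy hB hC _ cY aY α h0 h1
  have q3 : (mpow (A + B) α).trace = ((RA * Ci) * mpow (A + B) α * (RA * Ci)ᴴ).trace
      + ((RB * Ci) * mpow (A + B) α * (RB * Ci)ᴴ).trace := by
    rw [Matrix.trace_mul_comm _ (RA * Ci)ᴴ, Matrix.trace_mul_comm _ (RB * Ci)ᴴ,
      ← Matrix.mul_assoc (RA * Ci)ᴴ (RA * Ci), ← Matrix.mul_assoc (RB * Ci)ᴴ (RB * Ci), gX, gY, ← Matrix.trace_add, ← Matrix.add_mul, gsum,
      mpow_eq_mfn hC.1, hPi, mfn_mul]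
    refine congrArg Matrix.trace (mfn_congr hC ?_)
    intro x hx
    rw [p0 x hx]
    split_ifs with h
    · simp [h, Real.zero_rpow h0.ne']
    · simp
  rw [q3, Complex.add_re]
  linarith

lemma cs_entry (Y Z : Matrix n n ℂ) (j : n) :
    ‖(Yᴴ * Z) j j‖ ^ 2 ≤ (∑ i, ‖Y i j‖ ^ 2) * (∑ i, ‖Z i j‖ ^ 2) := by
  have h1 : ‖(Yᴴ * Z) j j‖ ≤ ∑ i, ‖Y i j‖ * ‖Z i j‖ := by
    rw [Matrix.mul_apply]
    refine (norm_sum_le _ _).trans (le_of_eq ?_)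
    refine Finset.sum_congr rfl fun i _ => ?_
    rw [norm_mul, conjTranspose_apply, norm_star]
  refine le_trans ?_ (Finset.sum_mul_sq_le_sq_mul_sq _ _ _)
  gcongr

set_option maxHeartbeats 1600000 in
lemma holder_sandwich {K Q W : Matrix n n ℂ} (hK : Kᴴ = K) (hQ : Q.PosSemidef)
    (hW : Wᴴ * W = 1) (hW' : W * Wᴴ = 1) (κ : n → ℝ) (hκ : ∀ i, 0 ≤ κ i)
    (hKK : K * K = W * diagonal (fun i => ((κ i : ℝ) : ℂ)) * Wᴴ)
    (α : ℝ) (h0 : 1/2 ≤ α) (h1 : α < 1) :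
    (mpow (K * Q * K) α).trace.re ≤
      (∑ i, κ i ^ (α / (1 - α))) ^ (1 - α) * Q.trace.re ^ α := by
  have h0' : 0 < α := by linarith
  have h1' : 0 < 1 - α := by linarith
  have hM : (K * Q * K).PosSemidef := by
    have := hQ.conjTranspose_mul_mul_same K
    rwa [hK] at this
  rw [mpow_trace hM.1]
  set V := (hM.1.eigenvectorUnitary : Matrix n n ℂ) with hV
  set l := hM.1.eigenvalues with hl
  have hl0 : ∀ i, 0 ≤ l i := hM.eigenvalues_nonneg
  set R := mfn hQ.1 (fun x => x ^ (1/2 : ℝ)) with hR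
  have hRR : R * R = Q := by
    rw [hR, mfn_mul]
    conv_rhs => rw [← mfn_id hQ.1]
    apply mfn_congr hQ
    intro x hx
    rw [← Real.rpow_add' hx (by norm_num)]; norm_num
  have hRh : Rᴴ = R := mfn_herm _ _
  have hVV : Vᴴ * V = 1 := U_left hM.1
  have hVV' : V * Vᴴ = 1 := U_right hM.1
  have hMV : mfn hM.1 (fun x => x) = V * diagonal (fun i => ((l i : ℝ) : ℂ)) * Vᴴ := rfl
  set Z := R * K * V with hZ
  have hZh : Zᴴ = Vᴴ * K * R := by
    rw [hZ]; simp only [conjTranspose_mul, hRh, hK, Matrix.mul_assoc]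
  have hZZ : Zᴴ * Z = diagonal (fun i => ((l i : ℝ) : ℂ)) := by
    calc Zᴴ * Z = Vᴴ * (K * (R * R) * K) * V := by rw [hZh, hZ]; simp only [Matrix.mul_assoc]
      _ = Vᴴ * mfn hM.1 (fun x => x) * V := by rw [hRR, mfn_id]
      _ = (Vᴴ * V) * diagonal (fun i => ((l i : ℝ) : ℂ)) * (Vᴴ * V) := by
            rw [hMV]; simp only [Matrix.mul_assoc]
      _ = _ := by rw [hVV, Matrix.one_mul, Matrix.mul_one]
  set k : n → ℝ := fun j => ∑ i, ‖(K * V) i j‖ ^ 2 with hk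
  set d : n → ℝ := fun j => ∑ i, ‖(R * Z) i j‖ ^ 2 with hd
  have hk0 : ∀ j, 0 ≤ k j := fun j => Finset.sum_nonneg fun i _ => by positivity
  have hd0 : ∀ j, 0 ≤ d j := fun j => Finset.sum_nonneg fun i _ => by positivity
  have hcs : ∀ j, l j ^ 2 ≤ d j * k j := by
    intro j
    have := cs_entry (R * Z) (K * V) j
    have e : (R * Z)ᴴ * (K * V) = Zᴴ * Z := by
      rw [conjTranspose_mul, hRh, hZh, hZ]
      simp only [Matrix.mul_assoc]
    rw [e, hZZ, diagonal_apply_eq, Complex.norm_real, Real.norm_eq_abs, sq_abs] at this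
    exact this
  set c : n → ℝ := fun j => d j * (l j)⁻¹ with hc
  have hc0 : ∀ j, 0 ≤ c j := fun j => mul_nonneg (hd0 j) (inv_nonneg.mpr (hl0 j))
  have hlck : ∀ j, l j ≤ k j * c j := by
    intro j
    rcases (hl0 j).eq_or_lt with h | h
    · rw [← h]; exact mul_nonneg (hk0 j) (hc0 j)
    · have := hcs j
      simp only [hc]
      rw [← mul_assoc, ← div_eq_mul_inv, le_div_iff₀ h]
      nlinarith
  have hcsum : ∑ j, c j ≤ Q.trace.re := by
    set D : Matrix n n ℂ := diagonal (fun i => (((l i)⁻¹ : ℝ) : ℂ)) with hD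
    have hDh : Dᴴ = D := by
      rw [hD, diagonal_conjTranspose]; congr 1; funext i; simp
    set T := Z * D * Zᴴ with hT
    have hTh : Tᴴ = T := by
      rw [hT]; simp only [conjTranspose_mul, conjTranspose_conjTranspose, hDh, Matrix.mul_assoc]
    have hTT : T * T = T := by
      calc T * T = Z * (D * (Zᴴ * Z) * D) * Zᴴ := by rw [hT]; simp only [Matrix.mul_assoc]
        _ = T := by
          rw [hZZ, hT]
          congr 2
          rw [hD, diagonal_mul_diagonal, diagonal_mul_diagonal]
          congr 1
          funext i
          rcases eq_or_ne (l i) 0 with h | h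
          · simp [h]
          · push_cast
            have : (l i : ℂ) ≠ 0 := by exact_mod_cast h
            field_simp
    have hnn := (Matrix.posSemidef_conjTranspose_mul_self ((1 - T) * R)).trace_nonneg
    have e : ((1 - T) * R)ᴴ * ((1 - T) * R) = Q - R * T * R := by
      have e2 : (1 - T) * (1 - T) = 1 - T := by
        rw [Matrix.mul_sub, Matrix.sub_mul, Matrix.sub_mul, hTT]; simp
      rw [conjTranspose_mul, conjTranspose_sub, hTh, hRh, conjTranspose_one]
      calc R * (1 - T) * ((1 - T) * R) = R * ((1 - T) * (1 - T)) * R := by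
            simp only [Matrix.mul_assoc]
        _ = _ := by rw [e2, Matrix.mul_sub, Matrix.sub_mul, Matrix.mul_one, hRR]
    have e3 : (R * T * R).trace = ((∑ j, c j : ℝ) : ℂ) := by
      have : R * T * R = (R * Z * D) * (R * Z)ᴴ := by
        rw [conjTranspose_mul, hRh, hT]; simp only [Matrix.mul_assoc]
      rw [this, Matrix.trace_mul_comm, ← Matrix.mul_assoc, Matrix.trace]
      push_cast
      refine Finset.sum_congr rfl fun j _ => ?_
      rw [diag_apply, hD, mul_diagonal, gram_entry]
      simp only [hc, hd]
      push_cast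
      rfl
    rw [e, Matrix.trace_sub, e3] at hnn
    have := (Complex.le_def.mp hnn).1
    simp only [Complex.zero_re, Complex.sub_re, Complex.ofReal_re] at this
    linarith
  -- convexity for `k`
  set q := α / (1 - α) with hq
  have hq1 : 1 ≤ q := by rw [hq, le_div_iff₀ h1']; linarith
  set S := Wᴴ * V with hS
  have hSh : Sᴴ = Vᴴ * W := by rw [hS, conjTranspose_mul, conjTranspose_conjTranspose]
  have hkS : ∀ j, k j = ∑ i, ‖S i j‖ ^ 2 * κ i := by
    intro j
    have e := gram_entry (K * V) j
    have e2 : (K * V)ᴴ * (K * V) = Sᴴ * diagonal (fun i => ((κ i : ℝ) : ℂ)) * S := by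
      rw [conjTranspose_mul, hK, hSh]
      calc Vᴴ * K * (K * V) = Vᴴ * (K * K) * V := by simp only [Matrix.mul_assoc]
        _ = _ := by rw [hKK, hS]; simp only [Matrix.mul_assoc]
    rw [e2, dg_entry] at e
    exact_mod_cast e.symm
  have hcol : ∀ j, ∑ i, ‖S i j‖ ^ 2 = 1 := by
    intro j
    have e := gram_entry S j
    have : Sᴴ * S = 1 := by
      rw [hSh, hS]
      calc Vᴴ * W * (Wᴴ * V) = Vᴴ * (W * Wᴴ) * V := by simp only [Matrix.mul_assoc]
        _ = 1 := by rw [hW', Matrix.mul_one, hVV]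
    rw [this, one_apply_eq] at e
    exact_mod_cast e.symm
  have hrow : ∀ i, ∑ j, ‖S i j‖ ^ 2 = 1 := by
    intro i
    have e := gram_entry Sᴴ i
    have : Sᴴᴴ * Sᴴ = 1 := by
      rw [conjTranspose_conjTranspose, hSh, hS]
      calc Wᴴ * V * (Vᴴ * W) = Wᴴ * (V * Vᴴ) * W := by simp only [Matrix.mul_assoc]
        _ = 1 := by rw [hVV', Matrix.mul_one, hW]
    rw [this, one_apply_eq] at e
    simp only [conjTranspose_apply, norm_star] at e
    exact_mod_cast e.symm
  have hksum : ∑ j, k j ^ q ≤ ∑ i, κ i ^ q := by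
    calc ∑ j, k j ^ q ≤ ∑ j, ∑ i, ‖S i j‖ ^ 2 * κ i ^ q := by
          refine Finset.sum_le_sum fun j _ => ?_
          rw [hkS j]
          exact Real.rpow_arith_mean_le_arith_mean_rpow _ _ _ (fun i _ => by positivity)
            (hcol j) (fun i _ => hκ i) hq1
      _ = ∑ i, κ i ^ q := by
          rw [Finset.sum_comm]
          refine Finset.sum_congr rfl fun i _ => ?_
          rw [← Finset.sum_mul, hrow i, one_mul]
  have hcj : (1 / (1 - α)).HolderConjugate (1 / α) := by
    rw [Real.holderConjugate_iff]
    refine ⟨by rw [lt_div_iff₀ h1']; linarith, by field_simp; ring⟩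
  have h := Real.inner_le_Lp_mul_Lq_of_nonneg Finset.univ hcj
    (f := fun i => k i ^ α) (g := fun i => c i ^ α)
    (fun i _ => Real.rpow_nonneg (hk0 i) _)
    (fun i _ => Real.rpow_nonneg (hc0 i) _)
  have e1 : ∀ i, (k i ^ α) ^ (1 / (1 - α)) = k i ^ q := fun i => by
    rw [← Real.rpow_mul (hk0 i), mul_one_div]
  have e2 : ∀ i, (c i ^ α) ^ (1 / α) = c i := fun i => by
    rw [← Real.rpow_mul (hc0 i), mul_one_div_cancel h0'.ne', Real.rpow_one]
  simp only [e1, e2, one_div_one_div] at h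
  calc ∑ i, l i ^ α ≤ ∑ i, k i ^ α * c i ^ α := by
        refine Finset.sum_le_sum fun j _ => ?_
        rw [← Real.mul_rpow (hk0 j) (hc0 j)]
        exact Real.rpow_le_rpow (hl0 j) (hlck j) h0'.le
    _ ≤ _ := h
    _ ≤ _ := by
        have hks0 : 0 ≤ ∑ j, k j ^ q := Finset.sum_nonneg fun j _ => Real.rpow_nonneg (hk0 j) _
        have hcs0 : 0 ≤ ∑ j, c j := Finset.sum_nonneg fun j _ => hc0 j
        exact mul_le_mul (Real.rpow_le_rpow hks0 hksum h1'.le)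
          (Real.rpow_le_rpow hcs0 hcsum h0'.le) (Real.rpow_nonneg hcs0 _)
          (Real.rpow_nonneg (hks0.trans hksum) _)

end helpers

lemma kr_herm {dA dB : ℕ} {η : Matrix (Fin dB) (Fin dB) ℂ} (hη : η.IsHermitian) (t : ℝ) :
    ((1 : Matrix (Fin dA) (Fin dA) ℂ) ⊗ₖ mpow η t)ᴴ
      = (1 : Matrix (Fin dA) (Fin dA) ℂ) ⊗ₖ mpow η t := by
  rw [conjTranspose_kronecker, conjTranspose_one, mpow_eq_mfn hη, mfn_herm]

lemma sandTr_bound {dA dB : ℕ} (α : ℝ) (hα : α ∈ Set.Ico (1/2 : ℝ) 1)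
    (Q : Matrix (Fin dA × Fin dB) (Fin dA × Fin dB) ℂ) (hQ : Q.PosSemidef)
    (η : Matrix (Fin dB) (Fin dB) ℂ) (hη : IsDensity η) :
    sandTr α Q η ≤ (dA : ℝ) ^ (1 - α) * Q.trace.re ^ α := by
  obtain ⟨ha, hb⟩ := hα
  have ha' : 0 < α := by linarith
  have hb' : 0 < 1 - α := by linarith
  have hH := hη.1.1
  have hnn := hη.1.eigenvalues_nonneg
  set U := (hH.eigenvectorUnitary : Matrix (Fin dB) (Fin dB) ℂ) with hU
  have h := holder_sandwich (K := (1 : Matrix (Fin dA) (Fin dA) ℂ) ⊗ₖ mpow η ((1 - α)/(2*α)))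
    (W := (1 : Matrix (Fin dA) (Fin dA) ℂ) ⊗ₖ U) (kr_herm hH _) hQ
    (by rw [conjTranspose_kronecker, ← mul_kronecker_mul, hU, U_left hH]; simp)
    (by rw [conjTranspose_kronecker, ← mul_kronecker_mul, hU, U_right hH]; simp)
    (fun x => hH.eigenvalues x.2 ^ ((1 - α)/α)) (fun x => Real.rpow_nonneg (hnn _) _)
    (by
      have hd : diagonal (fun x : Fin dA × Fin dB =>
          ((hH.eigenvalues x.2 ^ ((1 - α)/α) : ℝ) : ℂ))
          = (1 : Matrix (Fin dA) (Fin dA) ℂ) ⊗ₖ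
            diagonal (fun i => ((hH.eigenvalues i ^ ((1 - α)/α) : ℝ) : ℂ)) := by
        rw [← diagonal_one, diagonal_kronecker_diagonal]; simp
      rw [hd, conjTranspose_kronecker, ← mul_kronecker_mul, ← mul_kronecker_mul,
        ← mul_kronecker_mul, mpow_eq_mfn hH, mfn_mul]
      simp only [conjTranspose_one, Matrix.mul_one]
      congr 1
      change _ = mfn hH (fun x => x ^ ((1 - α)/α))
      apply mfn_congr hη.1
      intro x hx
      have : 0 < (1 - α)/(2*α) := by positivity
      rw [← Real.rpow_add' hx (by positivity)]
      congr 1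
      field_simp
      ring)
    α ha hb
  have hs : ∑ x : Fin dA × Fin dB, (hH.eigenvalues x.2 ^ ((1 - α)/α)) ^ (α / (1 - α)) = dA := by
    have e : ∀ i, (hH.eigenvalues i ^ ((1 - α)/α)) ^ (α / (1 - α)) = hH.eigenvalues i := by
      intro i
      rw [← Real.rpow_mul (hnn i), div_mul_div_cancel₀ ha'.ne', div_self hb'.ne', Real.rpow_one]
    have t : ∑ i, hH.eigenvalues i = 1 := by
      have := mfn_trace hH (fun x => x)
      rw [mfn_id, hη.2] at this
      exact_mod_cast this.symm
    simp only [e]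
    rw [Fintype.sum_prod_type]
    simp [t]
  rw [hs] at h
  exact h

/-- Intermediate upper bound: for any conditioning state `η`,
`tr((η^{-α'/2}(σ + εP)η^{-α'/2})^α) ≤ 2^{(1-α)H̃_α^↑(A|B)_ρ} + ε^α d_A^{1-α}`. -/
theorem sandTr_upper_bound {dA dB : ℕ} (α : ℝ) (hα : α ∈ Set.Ico (1/2 : ℝ) 1)
    (ρ σ P Q : Matrix (Fin dA × Fin dB) (Fin dA × Fin dB) ℂ)
    (hρ : IsDensity ρ) (hσ : IsDensity σ) (hP : IsDensity P) (hQ : IsDensity Q)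
    (ε : ℝ) (hε : 0 < ε) (heq : σ + ε • P = ρ + ε • Q)
    (η : Matrix (Fin dB) (Fin dB) ℂ) (hη : IsDensity η) :
    sandTr α (σ + ε • P) η ≤
      (2:ℝ) ^ ((1 - α) * Hcond α ρ) + ε ^ α * (dA : ℝ) ^ (1 - α) := by
  have hα' := hα
  obtain ⟨ha, hb⟩ := hα'
  have ha' : 0 < α := by linarith
  have hb' : 0 < 1 - α := by linarith
  set K : Matrix (Fin dA × Fin dB) (Fin dA × Fin dB) ℂ :=
    (1 : Matrix (Fin dA) (Fin dA) ℂ) ⊗ₖ mpow η ((1 - α)/(2*α)) with hK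
  have hKh : Kᴴ = K := kr_herm hη.1.1 _
  have hεQ : (ε • Q).PosSemidef := hQ.1.smul hε.le
  have hsand : ∀ {D : Matrix (Fin dA × Fin dB) (Fin dA × Fin dB) ℂ}, D.PosSemidef →
      (K * D * K).PosSemidef := by
    intro D hD
    have := hD.conjTranspose_mul_mul_same K
    rwa [hKh] at this
  have hsub : sandTr α (σ + ε • P) η ≤ sandTr α ρ η + sandTr α (ε • Q) η := by
    rw [heq]
    have := mccarthy (hsand hρ.1) (hsand hεQ) α ha' hb
    rw [← Matrix.add_mul, ← Matrix.mul_add] at this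
    exact this
  have hQb : sandTr α (ε • Q) η ≤ ε ^ α * (dA : ℝ) ^ (1 - α) := by
    have := sandTr_bound α hα (ε • Q) hεQ η hη
    rw [Matrix.trace_smul, hQ.2, Complex.real_smul, mul_one, Complex.ofReal_re] at this
    linarith
  have hnonneg : ∀ ξ : Matrix (Fin dB) (Fin dB) ℂ, IsDensity ξ → 0 ≤ sandTr α ρ ξ := by
    intro ξ hξ
    have hpsd := hρ.1.conjTranspose_mul_mul_same
      ((1 : Matrix (Fin dA) (Fin dA) ℂ) ⊗ₖ mpow ξ ((1 - α)/(2*α)))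
    rw [kr_herm hξ.1.1] at hpsd
    unfold sandTr
    rw [mpow_trace hpsd.1]
    exact Finset.sum_nonneg fun i _ => Real.rpow_nonneg (hpsd.eigenvalues_nonneg i) _
  have hdA : 1 ≤ (dA : ℝ) := by
    rcases Nat.eq_zero_or_pos dA with h | h
    · subst h
      have := hρ.2
      simp [Matrix.trace] at this
    · exact_mod_cast h
  have hbdd : BddAbove (Set.range fun ξ : {ξ : Matrix (Fin dB) (Fin dB) ℂ // IsDensity ξ} =>
      (1/(1-α)) * Real.logb 2 (sandTr α ρ ξ)) := by
    refine ⟨(1/(1-α)) * Real.logb 2 ((dA : ℝ) ^ (1 - α)), ?_⟩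
    rintro _ ⟨ξ, rfl⟩
    have h1 := sandTr_bound α hα ρ hρ.1 ξ.1 ξ.2
    rw [hρ.2, Complex.one_re, Real.one_rpow, mul_one] at h1
    have hdp : 1 ≤ (dA : ℝ) ^ (1 - α) := Real.one_le_rpow hdA hb'.le
    refine mul_le_mul_of_nonneg_left ?_ (by positivity)
    rcases (hnonneg ξ.1 ξ.2).eq_or_lt with h | h
    · rw [← h, Real.logb_zero]
      exact Real.logb_nonneg (by norm_num) hdp
    · exact Real.logb_le_logb_of_le (by norm_num) h h1
  have hρb : sandTr α ρ η ≤ (2:ℝ) ^ ((1 - α) * Hcond α ρ) := by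
    rcases (hnonneg η hη).eq_or_lt with h | h
    · rw [← h]; positivity
    · have hle := le_ciSup hbdd ⟨η, hη⟩
      have hle2 : Real.logb 2 (sandTr α ρ η) ≤ (1 - α) * Hcond α ρ := by
        have := mul_le_mul_of_nonneg_left hle hb'.le
        rw [← mul_assoc, mul_one_div_cancel hb'.ne', one_mul] at this
        exact this
      exact (Real.logb_le_iff_le_rpow (by norm_num) h).mp hle2
  linarith
end

section
/- For α ∈ [1/2, 1) ∪ (1, ∞], the sandwiched Rényi relative entropy D̃_α satisfies the data processing inequality: for any completely positive trace-preserving map Φ and positive operators P, Q with tr(P) ≠ 0, D̃_α(P‖Q) ≥ D̃_α(Φ(P)‖Φ(Q)). -/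
open Matrix MeasureTheory
open scoped Kronecker ComplexOrder Classical

/-- The sandwiched Rényi relative entropy `D̃_α(P‖Q)`, valued in `EReal`. -/
noncomputable def Dtilde {n : Type*} [Fintype n] [DecidableEq n]
    (α : ℝ) (P Q : Matrix n n ℂ) : EReal :=
  if (α < 1 ∧ P * Q ≠ 0) ∨ (∀ v : n → ℂ, Q.mulVec v = 0 → P.mulVec v = 0) then
    (((1/(α-1)) * Real.logb 2
      ((mpow (mpow Q ((1-α)/(2*α)) * P * mpow Q ((1-α)/(2*α))) α).trace.re
        / P.trace.re) : ℝ) : EReal)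
  else ⊤

/-- `Φ ⊗ id_k` applied entrywise, used to define complete positivity. -/
def mapTensorId {n m : Type*} [Fintype n] [DecidableEq n] [Fintype m] [DecidableEq m]
    (Φ : Matrix n n ℂ →ₗ[ℂ] Matrix m m ℂ) (k : ℕ)
    (X : Matrix (n × Fin k) (n × Fin k) ℂ) : Matrix (m × Fin k) (m × Fin k) ℂ :=
  Matrix.of fun p q => Φ (Matrix.of fun c d => X (c, p.2) (d, q.2)) p.1 q.1

/-- A completely positive trace-preserving map. -/
def IsCPTP {n m : Type*} [Fintype n] [DecidableEq n] [Fintype m] [DecidableEq m]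
    (Φ : Matrix n n ℂ →ₗ[ℂ] Matrix m m ℂ) : Prop :=
  (∀ (k : ℕ) (X : Matrix (n × Fin k) (n × Fin k) ℂ),
      X.PosSemidef → (mapTensorId Φ k X).PosSemidef) ∧
  ∀ X : Matrix n n ℂ, (Φ X).trace = X.trace

namespace DPI
set_option linter.unusedSectionVars false

/-- Power function with the support convention. -/
noncomputable def pw (z : ℂ) (x : ℝ) : ℂ := if x = 0 then 0 else Complex.exp (z * (Real.log x : ℂ))

lemma pw_mul (z w : ℂ) (x : ℝ) : pw z x * pw w x = pw (z + w) x := by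
  unfold pw
  split_ifs
  · simp
  · rw [← Complex.exp_add, add_mul]

lemma pw_star (z : ℂ) (x : ℝ) : star (pw z x) = pw (star z) x := by
  unfold pw
  split_ifs
  · simp
  · rw [Complex.star_def, ← Complex.exp_conj]; simp

lemma pw_real (p : ℝ) (hp : p ≠ 0) (x : ℝ) (hx : 0 ≤ x) : pw (p : ℂ) x = ((x ^ p : ℝ) : ℂ) := by
  unfold pw
  split_ifs with h
  · simp [h, Real.zero_rpow hp]
  · rw [Real.rpow_def_of_pos (lt_of_le_of_ne hx (Ne.symm h))]
    push_cast
    rw [mul_comm]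

/-- Complex matrix power with the support convention. -/
noncomputable def cp {n : Type*} [Fintype n] [DecidableEq n]
    (A : Matrix n n ℂ) (z : ℂ) : Matrix n n ℂ :=
  if hA : A.IsHermitian then
    (hA.eigenvectorUnitary : Matrix n n ℂ) *
      Matrix.diagonal (fun i => pw z (hA.eigenvalues i)) *
      (star (hA.eigenvectorUnitary : Matrix n n ℂ))
  else 0

section
variable {n : Type*} [Fintype n] [DecidableEq n] {A : Matrix n n ℂ}

lemma cp_mul (A : Matrix n n ℂ) (z w : ℂ) : cp A z * cp A w = cp A (z + w) := by
  unfold cp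
  split_ifs with hA
  · have h : star (hA.eigenvectorUnitary : Matrix n n ℂ) * (hA.eigenvectorUnitary : Matrix n n ℂ) = 1 :=
      Unitary.coe_star_mul_self _
    simp only [← pw_mul, ← Matrix.diagonal_mul_diagonal]
    generalize (hA.eigenvectorUnitary : Matrix n n ℂ) = U at *
    simp only [mul_assoc]
    rw [← mul_assoc (star U) U, h, one_mul]
  · simp

lemma cp_mul_assoc (A B : Matrix n n ℂ) (z w : ℂ) : cp A z * (cp A w * B) = cp A (z + w) * B := by
  rw [← mul_assoc, cp_mul]

lemma cp_conj (A : Matrix n n ℂ) (z : ℂ) : (cp A z)ᴴ = cp A (star z) := by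
  unfold cp
  split_ifs with hA
  · simp only [Matrix.conjTranspose_mul, Matrix.diagonal_conjTranspose, Matrix.star_eq_conjTranspose,
      Matrix.conjTranspose_conjTranspose, mul_assoc]
    congr 3
    ext i
    simp [pw_star]
  · simp

lemma cp_one (hA : A.PosSemidef) : cp A 1 = A := by
  have h := hA.1.spectral_theorem
  rw [Unitary.conjStarAlgAut_apply] at h
  unfold cp
  rw [dif_pos hA.1]
  conv_rhs => rw [h]
  congr 3
  ext i
  have := pw_real 1 one_ne_zero _ (hA.eigenvalues_nonneg i)
  simpa using this

lemma mpow_eq (hA : A.PosSemidef) (p : ℝ) (hp : p ≠ 0) : mpow A p = cp A (p : ℂ) := by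
  unfold cp mpow
  rw [dif_pos hA.1, dif_pos hA.1]
  congr 3
  ext i
  exact (pw_real p hp _ (hA.eigenvalues_nonneg i)).symm

lemma one_sub_cp (A : Matrix n n ℂ) : (1 - cp A 0).PosSemidef := by
  have hh : (cp A 0)ᴴ = cp A 0 := by rw [cp_conj]; simp
  have h2 : cp A 0 * cp A 0 = cp A 0 := by rw [cp_mul]; simp
  have : 1 - cp A 0 = (1 - cp A 0)ᴴ * (1 - cp A 0) := by
    rw [Matrix.conjTranspose_sub, hh, Matrix.conjTranspose_one]
    simp only [mul_sub, sub_mul, h2, mul_one, one_mul]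
    simp
  rw [this]
  exact Matrix.posSemidef_conjTranspose_mul_self _

lemma cp_psd (A : Matrix n n ℂ) (r : ℝ) : (cp A (r : ℂ)).PosSemidef := by
  have : cp A (r : ℂ) = (cp A ((r / 2 : ℝ) : ℂ))ᴴ * cp A ((r / 2 : ℝ) : ℂ) := by
    rw [cp_conj, cp_mul]; congr 1; simp
  rw [this]
  exact Matrix.posSemidef_conjTranspose_mul_self _

lemma re_trace_nonneg (hA : A.PosSemidef) : 0 ≤ A.trace.re :=
  (Complex.nonneg_iff.mp hA.trace_nonneg).1

lemma re_trace_eq (hA : A.PosSemidef) : A.trace = (A.trace.re : ℂ) := by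
  have := (Complex.nonneg_iff.mp hA.trace_nonneg).2
  apply Complex.ext <;> simp [← this]

lemma cp_trace_pos (hA : A.PosSemidef) (h0 : A ≠ 0) (r : ℝ) : 0 < (cp A (r : ℂ)).trace.re := by
  refine lt_of_le_of_ne (re_trace_nonneg (cp_psd A r)) fun h => h0 ?_
  have h1 : (cp A (r : ℂ)).trace = 0 := by rw [re_trace_eq (cp_psd A r), ← h]; simp
  rw [(cp_psd A r).trace_eq_zero_iff] at h1
  rw [← cp_one hA]
  have : (1 : ℂ) = r + (1 - r) := by ring
  rw [this, ← cp_mul, h1, zero_mul]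

lemma cp_zero_mat (r : ℝ) : cp (0 : Matrix n n ℂ) (r : ℂ) = 0 := by
  have h := cp_one (Matrix.PosSemidef.zero : (0 : Matrix n n ℂ).PosSemidef)
  have : (r : ℂ) = 1 + (r - 1) := by ring
  rw [this, ← cp_mul, h, zero_mul]

lemma tr_mono {X Y : Matrix n n ℂ} (h : (Y - X).PosSemidef)
    (M : Matrix n n ℂ) : (Mᴴ * X * M).trace.re ≤ (Mᴴ * Y * M).trace.re := by
  have := (Complex.nonneg_iff.mp (h.conjTranspose_mul_mul_same M).trace_nonneg).1
  rw [mul_sub, sub_mul, Matrix.trace_sub, Complex.sub_re] at this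
  linarith

end
end DPI
namespace DPI
section
variable {n m : Type*} [Fintype n] [DecidableEq n] [Fintype m] [DecidableEq m]

/-- contraction -/
def Ct (K : Matrix n n ℂ) : Prop := (1 - K * Kᴴ).PosSemidef

lemma Ct.mul {K L : Matrix n n ℂ} (hK : Ct K) (hL : Ct L) : Ct (K * L) := by
  unfold Ct at *
  have : 1 - K * L * (K * L)ᴴ = (1 - K * Kᴴ) + K * (1 - L * Lᴴ) * Kᴴ := by
    rw [Matrix.conjTranspose_mul]
    noncomm_ring
  rw [this]
  exact hK.add (hL.mul_mul_conjTranspose_same K)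

lemma ct_cp (A : Matrix n n ℂ) (z : ℂ) (hz : z.re = 0) : Ct (cp A z) := by
  unfold Ct
  rw [cp_conj, cp_mul]
  have : z + star z = 0 := by
    apply Complex.ext <;> simp [hz]
  rw [this]
  exact one_sub_cp A

lemma Ct.trace_le {K : Matrix n n ℂ} (hK : Ct K) (Y : Matrix n n ℂ) :
    (Kᴴ * (Yᴴ * Y) * K).trace.re ≤ (Yᴴ * Y).trace.re := by
  have h := (Complex.nonneg_iff.mp (Matrix.PosSemidef.mul_mul_conjTranspose_same hK Y).trace_nonneg).1
  rw [mul_sub, sub_mul, Matrix.trace_sub, Complex.sub_re] at h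
  have e1 : (Y * 1 * Yᴴ).trace = (Yᴴ * Y).trace := by rw [mul_one, Matrix.trace_mul_comm]
  have e2 : (Y * (K * Kᴴ) * Yᴴ).trace = (Kᴴ * (Yᴴ * Y) * K).trace := by
    have : Y * (K * Kᴴ) * Yᴴ = (Y * K) * (Kᴴ * Yᴴ) := by simp only [mul_assoc]
    rw [this, Matrix.trace_mul_comm]
    simp only [mul_assoc]
  rw [e1, e2] at h
  linarith

lemma exists_sq {S : Matrix n n ℂ} (hS : S.PosSemidef) : ∃ Y : Matrix n n ℂ, Yᴴ * Y = S := by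
  refine ⟨cp S (1/2), ?_⟩
  rw [cp_conj, cp_mul]
  conv_rhs => rw [← cp_one hS]
  congr 1
  simp; norm_num

variable {Φ : Matrix n n ℂ →ₗ[ℂ] Matrix m m ℂ}

lemma pos (hΦ : IsCPTP Φ) {X : Matrix n n ℂ} (hX : X.PosSemidef) : (Φ X).PosSemidef :=
  (hΦ.1 1 _ (hX.submatrix (Prod.fst : n × Fin 1 → n))).submatrix (fun p : m => (p, (0 : Fin 1)))

lemma cp_key (hΦ : IsCPTP Φ) (X : Fin 2 → Matrix n n ℂ) (N : Fin 2 → Matrix m m ℂ) :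
    0 ≤ (∑ i, ∑ j, ((N i)ᴴ * Φ ((X i)ᴴ * X j) * N j).trace).re := by
  let Z : Matrix n (n × Fin 2) ℂ := Matrix.of fun a c => X c.2 a c.1
  let W : Matrix (m × Fin 2) m ℂ := Matrix.of fun p q => N p.2 p.1 q
  have h := ((hΦ.1 2 _ (Matrix.posSemidef_conjTranspose_mul_self Z)).conjTranspose_mul_mul_same
    W).trace_nonneg
  have e : (Wᴴ * mapTensorId Φ 2 (Zᴴ * Z) * W).trace
      = ∑ i, ∑ j, ((N i)ᴴ * Φ ((X i)ᴴ * X j) * N j).trace := by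
    have e1 : ∀ p q : m × Fin 2, mapTensorId Φ 2 (Zᴴ * Z) p q
        = Φ ((X p.2)ᴴ * X q.2) p.1 q.1 := by
      intro p q
      rfl
    simp only [Matrix.trace, Matrix.diag, Matrix.mul_apply, e1, Fintype.sum_prod_type,
      Fin.sum_univ_two, Matrix.conjTranspose_apply, W, Matrix.of_apply, add_mul, Finset.sum_add_distrib]
    ring
  rw [e] at h
  exact (Complex.nonneg_iff.mp h).1

lemma phi_conj (hΦ : IsCPTP Φ) (X Y : Matrix n n ℂ) : (Φ (Xᴴ * Y))ᴴ = Φ (Yᴴ * X) := by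
  let V : Fin 2 → Matrix n n ℂ := ![X, Y]
  let Z : Matrix n (n × Fin 2) ℂ := Matrix.of fun a c => V c.2 a c.1
  have h := (hΦ.1 2 _ (Matrix.posSemidef_conjTranspose_mul_self Z)).1
  ext p q
  exact h.apply (p, 1) (q, 0)

lemma cp_cs (hΦ : IsCPTP Φ) (X Y : Matrix n n ℂ) (N M : Matrix m m ℂ) :
    ‖(Nᴴ * Φ (Xᴴ * Y) * M).trace‖ ^ 2 ≤
      (Nᴴ * Φ (Xᴴ * X) * N).trace.re * (Mᴴ * Φ (Yᴴ * Y) * M).trace.re := by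
  set c := (Nᴴ * Φ (Xᴴ * Y) * M).trace with hc
  set d := (Mᴴ * Φ (Yᴴ * X) * N).trace with hd
  set a := (Nᴴ * Φ (Xᴴ * X) * N).trace with ha
  set b := (Mᴴ * Φ (Yᴴ * Y) * M).trace with hb
  have key : ∀ t : ℂ, 0 ≤ (a + t * c + star t * d + star t * t * b).re := by
    intro t
    have := cp_key hΦ ![X, Y] ![N, t • M]
    simp only [Fin.sum_univ_two, Matrix.cons_val_zero, Matrix.cons_val_one,
      Matrix.conjTranspose_smul, Matrix.smul_mul, Matrix.mul_smul, Matrix.trace_smul,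
      ← hc, ← hd, ← ha, ← hb, smul_eq_mul] at this
    convert this using 2
    ring
  have hdc : d = star c := by
    rw [hc, hd, ← Matrix.trace_conjTranspose, Matrix.conjTranspose_mul, Matrix.conjTranspose_mul,
      phi_conj hΦ, Matrix.conjTranspose_conjTranspose, mul_assoc]
  by_cases h0 : c = 0
  · rw [h0, norm_zero]
    have ha0 : 0 ≤ a.re := (Complex.nonneg_iff.mp ((pos hΦ
      (Matrix.posSemidef_conjTranspose_mul_self X)).conjTranspose_mul_mul_same N).trace_nonneg).1
    have hb0 : 0 ≤ b.re := (Complex.nonneg_iff.mp ((pos hΦ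
      (Matrix.posSemidef_conjTranspose_mul_self Y)).conjTranspose_mul_mul_same M).trace_nonneg).1
    nlinarith [mul_nonneg ha0 hb0]
  have hn : 0 < ‖c‖ ^ 2 := by positivity
  have k2 : ∀ r : ℝ, 0 ≤ (‖c‖ ^ 2 * b.re) * (r * r) + (2 * ‖c‖ ^ 2) * r + a.re := by
    intro r
    have := key (r * star c)
    rw [hdc] at this
    have e : a + (r * star c) * c + star (r * star c) * star c
        + star (r * star c) * (r * star c) * b
        = a + ((2 * r * ‖c‖ ^ 2 : ℝ) : ℂ) + ((r * r * ‖c‖ ^ 2 : ℝ) : ℂ) * b := by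
      have hcc : star c * c = ((‖c‖ ^ 2 : ℝ) : ℂ) := by
        rw [Complex.star_def, Complex.conj_mul']; simp
      have : star (r * star c) = r * c := by simp
      rw [this]
      push_cast at hcc ⊢
      linear_combination (2 * r + r * r * b) * hcc
    rw [e] at this
    simp only [Complex.add_re, Complex.ofReal_re, Complex.re_ofReal_mul] at this
    linarith
  have := discrim_le_zero k2
  unfold discrim at this
  have h3 : ‖c‖ ^ 2 * ‖c‖ ^ 2 ≤ ‖c‖ ^ 2 * (a.re * b.re) := by nlinarith
  exact le_of_mul_le_mul_left h3 hn
end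
end DPI
namespace DPI
set_option linter.unusedSectionVars false

/-- entire and bounded on the strip -/
def Good (f : ℂ → ℂ) : Prop :=
  Differentiable ℂ f ∧ ∃ C : ℝ, ∀ z : ℂ, z.re ∈ Set.Icc (0 : ℝ) 1 → ‖f z‖ ≤ C

lemma Good.const (c : ℂ) : Good (fun _ => c) := ⟨by fun_prop, ‖c‖, fun _ _ => le_rfl⟩

lemma Good.add {f g : ℂ → ℂ} (hf : Good f) (hg : Good g) : Good (fun z => f z + g z) := by
  obtain ⟨hf, C, hC⟩ := hf
  obtain ⟨hg, D, hD⟩ := hg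
  exact ⟨by fun_prop, C + D, fun z hz => (norm_add_le _ _).trans (add_le_add (hC z hz) (hD z hz))⟩

lemma Good.mul {f g : ℂ → ℂ} (hf : Good f) (hg : Good g) : Good (fun z => f z * g z) := by
  obtain ⟨hf, C, hC⟩ := hf
  obtain ⟨hg, D, hD⟩ := hg
  refine ⟨by fun_prop, C * D, fun z hz => ?_⟩
  rw [norm_mul]
  exact mul_le_mul (hC z hz) (hD z hz) (norm_nonneg _) ((norm_nonneg _).trans (hC z hz))

lemma Good.sum {ι : Type*} (s : Finset ι) {f : ι → ℂ → ℂ} (hf : ∀ i, Good (f i)) :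
    Good (fun z => ∑ i ∈ s, f i z) := by
  classical
  induction s using Finset.induction_on with
  | empty => simpa using Good.const 0
  | insert a s ha ih =>
    simp only [Finset.sum_insert ha]
    exact (hf a).add ih

lemma good_pw (c : ℝ) (x : ℝ) : Good (fun z => pw (c * z) x) := by
  unfold pw
  by_cases h : x = 0
  · simpa [h] using Good.const 0
  · simp only [h, if_false]
    refine ⟨by fun_prop, Real.exp |c * Real.log x|, fun z hz => ?_⟩
    rw [Complex.norm_exp]
    apply Real.exp_le_exp.mpr
    have : ((c : ℂ) * z * (Real.log x : ℂ)).re = z.re * (c * Real.log x) := by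
      simp [Complex.mul_re]; ring
    rw [this]
    calc z.re * (c * Real.log x) ≤ z.re * |c * Real.log x| :=
          mul_le_mul_of_nonneg_left (le_abs_self _) hz.1
      _ ≤ 1 * |c * Real.log x| := mul_le_mul_of_nonneg_right hz.2 (abs_nonneg _)
      _ = _ := one_mul _

section
variable {n m : Type*} [Fintype n] [DecidableEq n] [Fintype m] [DecidableEq m]

/-- entrywise good -/
def GoodM (F : ℂ → Matrix n n ℂ) : Prop := ∀ i j, Good (fun z => F z i j)

lemma GoodM.const (A : Matrix n n ℂ) : GoodM (fun _ => A) := fun _ _ => Good.const _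

lemma GoodM.mul {F G : ℂ → Matrix n n ℂ} (hF : GoodM F) (hG : GoodM G) :
    GoodM (fun z => F z * G z) := by
  intro i j
  simp only [Matrix.mul_apply]
  exact Good.sum _ fun k => (hF i k).mul (hG k j)

lemma GoodM.trace {F : ℂ → Matrix n n ℂ} (hF : GoodM F) : Good (fun z => (F z).trace) :=
  Good.sum _ fun k => hF k k

lemma GoodM.map {F : ℂ → Matrix n n ℂ} (hF : GoodM F) (Φ : Matrix n n ℂ →ₗ[ℂ] Matrix m m ℂ) :
    GoodM (fun z => Φ (F z)) := by
  intro i j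
  have : ∀ X : Matrix n n ℂ, Φ X i j = ∑ k, ∑ l, X k l * Φ (Matrix.single k l 1) i j := by
    intro X
    conv_lhs => rw [Matrix.matrix_eq_sum_single X]
    simp only [map_sum, Matrix.sum_apply]
    refine Finset.sum_congr rfl fun k _ => Finset.sum_congr rfl fun l _ => ?_
    have : Matrix.single k l (X k l) = X k l • Matrix.single k l (1 : ℂ) := by simp
    rw [this, map_smul]
    rfl
  have e : (fun z => Φ (F z) i j) = fun z => ∑ k, ∑ l, F z k l * Φ (Matrix.single k l 1) i j :=
    funext fun z => this _
  rw [e]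
  exact Good.sum _ fun k => Good.sum _ fun l => (hF k l).mul (Good.const _)

lemma goodM_cp (A : Matrix n n ℂ) (c : ℝ) : GoodM (fun z => cp A (c * z)) := by
  unfold cp
  by_cases hA : A.IsHermitian
  · simp only [hA, dif_pos]
    refine GoodM.mul (GoodM.mul (GoodM.const _) ?_) (GoodM.const _)
    intro i j
    by_cases h : i = j
    · subst h
      simpa using good_pw c _
    · simpa [Matrix.diagonal_apply_ne _ h] using Good.const 0
  · simpa [hA] using GoodM.const 0

end

open Complex.HadamardThreeLines in
lemma Good.three_lines {f : ℂ → ℂ} (hf : Good f) {a b : ℝ}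
    (ha : ∀ z : ℂ, z.re = 0 → ‖f z‖ ≤ a) (hb : ∀ z : ℂ, z.re = 1 → ‖f z‖ ≤ b)
    (θ : ℝ) (hθ : θ ∈ Set.Icc (0 : ℝ) 1) : ‖f θ‖ ≤ a ^ (1 - θ) * b ^ θ := by
  obtain ⟨hd, C, hC⟩ := hf
  have := norm_le_interp_of_mem_verticalClosedStrip' (f := f) (z := (θ : ℂ)) (a := a) (b := b)
    (l := 0) (u := 1) zero_lt_one (by simpa [verticalClosedStrip] using hθ)
    hd.diffContOnCl ⟨C, by rintro _ ⟨z, hz, rfl⟩; exact hC z hz⟩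
    (fun z hz => ha z (by simpa using hz)) (fun z hz => hb z (by simpa using hz))
  simpa using this

end DPI
namespace DPI
set_option linter.unusedSectionVars false
section
variable {n m : Type*} [Fintype n] [DecidableEq n] [Fintype m] [DecidableEq m]
variable {Φ : Matrix n n ℂ →ₗ[ℂ] Matrix m m ℂ}

lemma cp_mul' (A : Matrix n n ℂ) {z w u : ℂ} (h : z + w = u) : cp A z * cp A w = cp A u := by
  rw [cp_mul, h]

lemma cp_real_conj (A : Matrix n n ℂ) (r : ℝ) : (cp A (r : ℂ))ᴴ = cp A (r : ℂ) := by
  rw [cp_conj]; simp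

lemma cp_sand {A : Matrix n n ℂ} (hA : A.PosSemidef) {z w u : ℂ} (h : z + 1 + w = u) :
    cp A z * A * cp A w = cp A u := by
  have : cp A z * A = cp A (z + 1) := by
    calc cp A z * A = cp A z * cp A 1 := by rw [cp_one hA]
      _ = _ := cp_mul _ _ _
  rw [this, cp_mul' A h]

/-- The sandwiched operator. -/
noncomputable def sw (s : ℝ) (P Q : Matrix n n ℂ) : Matrix n n ℂ := cp Q (s : ℂ) * P * cp Q (s : ℂ)

lemma sw_psd (s : ℝ) {P : Matrix n n ℂ} (hP : P.PosSemidef) (Q : Matrix n n ℂ) :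
    (sw s P Q).PosSemidef := by
  have := hP.conjTranspose_mul_mul_same (cp Q (s : ℂ))
  rwa [cp_real_conj] at this

/-- The analytic family. -/
noncomputable def Xz (α s : ℝ) (X A Q : Matrix n n ℂ) (z : ℂ) : Matrix n n ℂ :=
  X * cp Q (s : ℂ) * cp A (((α - 1) / 2 : ℝ) : ℂ) * cp A ((-α / 2 : ℝ) * z) * cp Q ((1 / 2 : ℝ) * z)

/-- The other analytic family. -/
noncomputable def Mz (α : ℝ) (B Q : Matrix n n ℂ) (z : ℂ) : Matrix n n ℂ :=
  cp Q ((-1 / 2 : ℝ) * z) * cp B ((α / 2 : ℝ) * z)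

/-- The fixed dual element. -/
noncomputable def Nn (α s : ℝ) (B Q : Matrix n n ℂ) : Matrix n n ℂ :=
  cp Q (s : ℂ) * cp B (((α - 1) / 2 : ℝ) : ℂ)

lemma T_sq (α s : ℝ) {X P Q : Matrix n n ℂ} (hP : P.PosSemidef) (hX : Xᴴ * X = P) :
    (X * cp Q (s : ℂ) * cp (sw s P Q) (((α - 1) / 2 : ℝ) : ℂ))ᴴ *
      (X * cp Q (s : ℂ) * cp (sw s P Q) (((α - 1) / 2 : ℝ) : ℂ)) = cp (sw s P Q) (α : ℂ) := by
  rw [Matrix.conjTranspose_mul, Matrix.conjTranspose_mul, cp_real_conj, cp_real_conj]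
  rw [← cp_sand (sw_psd s hP Q) (z := (((α - 1) / 2 : ℝ) : ℂ)) (w := (((α - 1) / 2 : ℝ) : ℂ)) (u := (α : ℂ))
    (by push_cast; ring)]
  generalize cp (sw s P Q) (((α - 1) / 2 : ℝ) : ℂ) = G
  simp only [sw, ← hX, mul_assoc]

lemma N_tr (α s : ℝ) {P Q : Matrix n n ℂ} (hP : P.PosSemidef) :
    (Nn α s (sw s P Q) Q)ᴴ * P * Nn α s (sw s P Q) Q = cp (sw s P Q) (α : ℂ) := by
  rw [Nn, Matrix.conjTranspose_mul, cp_real_conj, cp_real_conj]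
  rw [← cp_sand (sw_psd s hP Q) (z := (((α - 1) / 2 : ℝ) : ℂ)) (w := (((α - 1) / 2 : ℝ) : ℂ)) (u := (α : ℂ))
    (by push_cast; ring)]
  generalize cp (sw s P Q) (((α - 1) / 2 : ℝ) : ℂ) = G
  simp only [sw, mul_assoc]

lemma interp (hΦ : IsCPTP Φ) (α s : ℝ) {X P Q : Matrix n n ℂ} (hP : P.PosSemidef)
    (hQ : Q.PosSemidef) (hX : Xᴴ * X = P) (θ : ℝ) (hθ : θ ∈ Set.Icc (0 : ℝ) 1) :
    ‖((Nn α s (sw s (Φ P) (Φ Q)) (Φ Q))ᴴ * Φ (Xᴴ * Xz α s X (sw s P Q) Q θ) *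
      Mz α (sw s (Φ P) (Φ Q)) (Φ Q) θ).trace‖ ≤
    (√((cp (sw s (Φ P) (Φ Q)) (α : ℂ)).trace.re * (cp (sw s P Q) (α : ℂ)).trace.re)) ^ (1 - θ) *
      (cp (sw s (Φ P) (Φ Q)) (α : ℂ)).trace.re ^ θ := by
  have hN := N_tr α s (Q := Φ Q) (pos hΦ hP)
  have hT := T_sq α s (Q := Q) hP hX
  have hA := sw_psd s hP Q
  have hB := sw_psd s (pos hΦ hP) (Φ Q)
  set A := sw s P Q with hAd
  set B := sw s (Φ P) (Φ Q) with hBd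
  have hb0 := re_trace_nonneg (cp_psd B α)
  have cs : ∀ z : ℂ, ‖((Nn α s B (Φ Q))ᴴ * Φ (Xᴴ * Xz α s X A Q z) * Mz α B (Φ Q) z).trace‖ ^ 2 ≤
      (cp B (α : ℂ)).trace.re * ((Mz α B (Φ Q) z)ᴴ * Φ ((Xz α s X A Q z)ᴴ * Xz α s X A Q z) *
        Mz α B (Φ Q) z).trace.re := by
    intro z
    have := cp_cs hΦ X (Xz α s X A Q z) (Nn α s B (Φ Q)) (Mz α B (Φ Q) z)
    rwa [hX, hN] at this
  refine Good.three_lines (f := fun z => ((Nn α s B (Φ Q))ᴴ * Φ (Xᴴ * Xz α s X A Q z) *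
    Mz α B (Φ Q) z).trace) ?_ ?_ ?_ θ hθ
  · refine GoodM.trace (GoodM.mul (GoodM.mul (GoodM.const _) (GoodM.map ?_ Φ)) ?_)
    · refine GoodM.mul (GoodM.const _) ?_
      exact GoodM.mul (GoodM.mul (GoodM.const _) (goodM_cp _ _)) (goodM_cp _ _)
    · exact GoodM.mul (goodM_cp _ _) (goodM_cp _ _)
  · intro z hz
    apply Real.le_sqrt_of_sq_le
    refine (cs z).trans (mul_le_mul_of_nonneg_left ?_ hb0)
    have hM : Ct (Mz α B (Φ Q) z) := by
      refine Ct.mul (ct_cp _ _ ?_) (ct_cp _ _ ?_) <;> rw [Complex.re_ofReal_mul, hz, mul_zero]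
    obtain ⟨Y, hY⟩ := exists_sq (pos hΦ (Matrix.posSemidef_conjTranspose_mul_self (Xz α s X A Q z)))
    have h1 := hM.trace_le Y
    rw [hY, hΦ.2] at h1
    refine h1.trans ?_
    have hK : Ct (cp A ((-α / 2 : ℝ) * z) * cp Q ((1 / 2 : ℝ) * z)) := by
      refine Ct.mul (ct_cp _ _ ?_) (ct_cp _ _ ?_) <;> rw [Complex.re_ofReal_mul, hz, mul_zero]
    have h2 := hK.trace_le (X * cp Q (s : ℂ) * cp A (((α - 1) / 2 : ℝ) : ℂ))
    rw [hT] at h2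
    refine le_trans (le_of_eq ?_) h2
    rw [← hT]
    unfold Xz
    simp only [Matrix.conjTranspose_mul, mul_assoc]
  · intro z hz
    have hzz : star z + z = 2 := by apply Complex.ext <;> simp [hz]; norm_num
    refine abs_le_of_sq_le_sq' ?_ hb0 |>.2
    refine (cs z).trans ?_
    rw [sq]
    refine mul_le_mul_of_nonneg_left ?_ hb0
    have hle : (Q - (Xz α s X A Q z)ᴴ * Xz α s X A Q z).PosSemidef := by
      have hV : (cp A ((-α / 2 : ℝ) * z))ᴴ * cp A (α : ℂ) * cp A ((-α / 2 : ℝ) * z) = cp A 0 := by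
        rw [cp_conj, cp_mul, cp_mul]
        congr 1
        rw [star_mul, Complex.star_def, Complex.conj_ofReal, ← Complex.star_def]
        push_cast
        linear_combination (-α / 2 : ℂ) * hzz
      have e : Q - (Xz α s X A Q z)ᴴ * Xz α s X A Q z =
          (cp Q ((1 / 2 : ℝ) * z))ᴴ * (1 - cp A 0) * cp Q ((1 / 2 : ℝ) * z) := by
        rw [mul_sub, sub_mul, mul_one]
        congr 1
        · rw [cp_conj, cp_mul]
          conv_lhs => rw [← cp_one hQ]
          congr 1
          rw [star_mul, Complex.star_def, Complex.conj_ofReal, ← Complex.star_def]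
          push_cast
          linear_combination (-1 / 2 : ℂ) * hzz
        · rw [← hV, ← hT]
          unfold Xz
          simp only [Matrix.conjTranspose_mul, mul_assoc]
      rw [e]
      exact (one_sub_cp A).conjTranspose_mul_mul_same _
    have hle2 := pos hΦ hle
    rw [map_sub] at hle2
    refine (tr_mono hle2 _).trans ?_
    have e : (Mz α B (Φ Q) z)ᴴ * Φ Q * Mz α B (Φ Q) z =
        (cp B ((α / 2 : ℝ) * z))ᴴ * cp (Φ Q) 0 * cp B ((α / 2 : ℝ) * z) := by
      have : (cp (Φ Q) ((-1 / 2 : ℝ) * z))ᴴ * Φ Q * cp (Φ Q) ((-1 / 2 : ℝ) * z) = cp (Φ Q) 0 := by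
        rw [cp_conj, cp_sand (pos hΦ hQ)]
        rw [star_mul, Complex.star_def, Complex.conj_ofReal, ← Complex.star_def]
        push_cast
        linear_combination (-1 / 2 : ℂ) * hzz
      rw [← this]
      unfold Mz
      simp only [Matrix.conjTranspose_mul, mul_assoc]
    rw [e]
    refine (tr_mono (one_sub_cp (Φ Q)) _).trans (le_of_eq ?_)
    rw [mul_one, cp_conj, cp_mul]
    congr 3
    rw [star_mul, Complex.star_def, Complex.conj_ofReal, ← Complex.star_def]
    push_cast
    linear_combination (α / 2 : ℂ) * hzz

end
end DPI
namespace DPI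
set_option linter.unusedSectionVars false

section
open scoped MatrixOrder Matrix.Norms.L2Operator
lemma exists_bound {n : Type*} [Fintype n] [DecidableEq n] {G : Matrix n n ℂ} (hG : G.PosSemidef) :
    ∃ c : ℝ, ((c : ℂ) • (1 : Matrix n n ℂ) - G).PosSemidef := by
  refine ⟨‖G‖, ?_⟩
  have h : G ≤ algebraMap ℝ (Matrix n n ℂ) ‖G‖ := IsSelfAdjoint.le_algebraMap_norm_self hG.1
  rw [Matrix.le_iff] at h
  have e : ((‖G‖ : ℝ) : ℂ) • (1 : Matrix n n ℂ) = algebraMap ℝ (Matrix n n ℂ) ‖G‖ := by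
    rw [Algebra.algebraMap_eq_smul_one]
    ext i j
    simp
  rw [e]
  exact h
end

section
variable {n m : Type*} [Fintype n] [DecidableEq n] [Fintype m] [DecidableEq m]
variable {Φ : Matrix n n ℂ →ₗ[ℂ] Matrix m m ℂ}

lemma self_mul_sub {A : Matrix n n ℂ} (hA : A.PosSemidef) : A * (1 - cp A 0) = 0 := by
  rw [mul_sub, mul_one, sub_eq_zero]
  have : cp A 1 = cp A 1 * cp A 0 := by rw [cp_mul, add_zero]
  rwa [cp_one hA] at this

lemma mul_cp_zero {A C : Matrix n n ℂ} (hA : A.PosSemidef) (h : Cᴴ * C = A) : C * cp A 0 = C := by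
  have e : Cᴴ * C * (1 - cp A 0) = 0 := by rw [h]; exact self_mul_sub hA
  rw [Matrix.conjTranspose_mul_self_mul_eq_zero, mul_sub, mul_one, sub_eq_zero] at e
  exact e.symm

lemma ker_iff {P Q : Matrix n n ℂ} (hQ : Q.PosSemidef) :
    (∀ v : n → ℂ, Q.mulVec v = 0 → P.mulVec v = 0) ↔ P * (1 - cp Q 0) = 0 := by
  constructor
  · intro h
    ext i j
    have := h ((1 - cp Q 0).mulVec (Pi.single j 1)) (by
      rw [Matrix.mulVec_mulVec, self_mul_sub hQ, Matrix.zero_mulVec])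
    rw [Matrix.mulVec_mulVec] at this
    have h2 := congrFun this i
    simpa using h2
  · intro h v hv
    have e : (cp Q 0).mulVec v = 0 := by
      have : cp Q 0 = cp Q (-1) * Q := by
        have : cp Q 0 = cp Q (-1) * cp Q 1 := by rw [cp_mul]; simp
        rwa [cp_one hQ] at this
      rw [this, ← Matrix.mulVec_mulVec, hv, Matrix.mulVec_zero]
    rw [mul_sub, mul_one, sub_eq_zero] at h
    rw [h, ← Matrix.mulVec_mulVec, e, Matrix.mulVec_zero]

lemma map_supp (hΦ : IsCPTP Φ) {P Q : Matrix n n ℂ} (hP : P.PosSemidef) (hQ : Q.PosSemidef)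
    (h : P * (1 - cp Q 0) = 0) : Φ P * (1 - cp (Φ Q) 0) = 0 := by
  have hh : (cp Q (0 : ℂ))ᴴ = cp Q 0 := by rw [cp_conj]; simp
  have h1 : P * cp Q 0 = P := by
    rw [mul_sub, mul_one, sub_eq_zero] at h
    exact h.symm
  have h2 : cp Q 0 * P = P := by
    have := congrArg Matrix.conjTranspose h1
    rwa [Matrix.conjTranspose_mul, hh, hP.1.eq] at this
  obtain ⟨c, hc⟩ := exists_bound (sw_psd (-1 / 2) hP Q)
  have e : (c : ℂ) • Q - P = (cp Q ((1 / 2 : ℝ) : ℂ))ᴴ *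
      ((c : ℂ) • (1 : Matrix n n ℂ) - sw (-1 / 2) P Q) * cp Q ((1 / 2 : ℝ) : ℂ) := by
    rw [mul_sub, sub_mul, cp_real_conj]
    congr 1
    · rw [Matrix.mul_smul, Matrix.smul_mul, mul_one, cp_mul]
      congr 1
      conv_lhs => rw [← cp_one hQ]
      congr 1
      push_cast; norm_num
    · rw [sw]
      have e1 : cp Q ((1 / 2 : ℝ) : ℂ) * cp Q ((-1 / 2 : ℝ) : ℂ) = cp Q 0 :=
        cp_mul' Q (by push_cast; norm_num)
      have e2 : cp Q ((-1 / 2 : ℝ) : ℂ) * cp Q ((1 / 2 : ℝ) : ℂ) = cp Q 0 :=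
        cp_mul' Q (by push_cast; norm_num)
      rw [← mul_assoc, ← mul_assoc, e1, h2, mul_assoc, e2, h1]
  have hle : ((c : ℂ) • Q - P).PosSemidef := by
    rw [e]; exact hc.conjTranspose_mul_mul_same _
  have hle2 := pos hΦ hle
  rw [map_sub, map_smul] at hle2
  have h3 := tr_mono hle2 (1 - cp (Φ Q) 0)
  rw [Matrix.mul_smul, mul_assoc ((1 - cp (Φ Q) 0)ᴴ), Matrix.smul_mul, mul_assoc _ (Φ Q),
    self_mul_sub (pos hΦ hQ)] at h3
  simp only [mul_zero, smul_zero, Matrix.trace_zero, Complex.zero_re] at h3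
  obtain ⟨Y, hY⟩ := exists_sq (pos hΦ hP)
  have h4 : (1 - cp (Φ Q) 0)ᴴ * (Φ P * (1 - cp (Φ Q) 0)) =
      (Y * (1 - cp (Φ Q) 0))ᴴ * (Y * (1 - cp (Φ Q) 0)) := by
    rw [← hY, Matrix.conjTranspose_mul]; simp only [mul_assoc]
  rw [h4] at h3
  have hps := Matrix.posSemidef_conjTranspose_mul_self (Y * (1 - cp (Φ Q) 0))
  have h5 : ((Y * (1 - cp (Φ Q) 0))ᴴ * (Y * (1 - cp (Φ Q) 0))).trace = 0 := by
    rw [re_trace_eq hps, le_antisymm h3 (re_trace_nonneg hps)]; simp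
  rw [Matrix.trace_conjTranspose_mul_self_eq_zero_iff] at h5
  rw [← hY, mul_assoc, h5, mul_zero]

lemma main_gt (hΦ : IsCPTP Φ) (α : ℝ) (hα : 1 < α) {P Q : Matrix n n ℂ} (hP : P.PosSemidef)
    (hQ : Q.PosSemidef) (h : P * (1 - cp Q 0) = 0) :
    (cp (sw ((1 - α) / (2 * α)) (Φ P) (Φ Q)) (α : ℂ)).trace.re ≤
      (cp (sw ((1 - α) / (2 * α)) P Q) (α : ℂ)).trace.re := by
  obtain ⟨X, hX⟩ := exists_sq hP
  have hα0 : (α : ℂ) ≠ 0 := by exact_mod_cast (by linarith : α ≠ 0)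
  set s := (1 - α) / (2 * α) with hs
  have hsc : (s : ℂ) = (1 - α) / (2 * α) := by rw [hs]; push_cast; ring
  have hθ0 : 1 / α < 1 := by rw [div_lt_one] <;> linarith
  have hθ1 : 0 < 1 / α := by positivity
  have key := interp hΦ α s hP hQ hX (1 - 1 / α) ⟨by linarith, by linarith⟩
  have eX : Xz α s X (sw s P Q) Q ((1 - 1 / α : ℝ) : ℂ) = X := by
    have hXs : X * cp Q 0 = X := by
      rw [← hX, Matrix.conjTranspose_mul_self_mul_eq_zero, mul_sub, mul_one, sub_eq_zero] at h
      exact h.symm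
    have hC : (X * cp Q (s : ℂ)) * cp (sw s P Q) 0 = X * cp Q (s : ℂ) := by
      apply mul_cp_zero (sw_psd s hP Q)
      rw [Matrix.conjTranspose_mul, cp_real_conj, sw, ← hX]
      simp only [mul_assoc]
    unfold Xz
    rw [mul_assoc _ (cp (sw s P Q) _) (cp (sw s P Q) _), cp_mul' _ (u := 0), hC, mul_assoc,
      cp_mul' _ (u := 0), hXs]
    · rw [hsc]; push_cast; field_simp; ring
    · push_cast; field_simp; ring
  have eM : Mz α (sw s (Φ P) (Φ Q)) (Φ Q) ((1 - 1 / α : ℝ) : ℂ)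
      = Nn α s (sw s (Φ P) (Φ Q)) (Φ Q) := by
    unfold Mz Nn
    congr 2
    · rw [hsc]; push_cast; field_simp; ring
    · push_cast; field_simp
  rw [eX, eM, hX, N_tr α s (pos hΦ hP), re_trace_eq (cp_psd _ α), Complex.norm_real,
    Complex.ofReal_re] at key
  have hb := re_trace_nonneg (cp_psd (sw s (Φ P) (Φ Q)) α)
  have ha := re_trace_nonneg (cp_psd (sw s P Q) α)
  generalize (cp (sw s (Φ P) (Φ Q)) (α : ℂ)).trace.re = b at *
  generalize (cp (sw s P Q) (α : ℂ)).trace.re = a at *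
  rw [Real.norm_of_nonneg hb] at key
  by_contra hab
  push Not at hab
  have hb' : 0 < b := lt_of_le_of_lt ha hab
  have h1 : √(b * a) < b := by
    rw [Real.sqrt_lt' hb']; nlinarith
  have h2 : √(b * a) ^ (1 - (1 - 1 / α)) < b ^ (1 - (1 - 1 / α)) :=
    Real.rpow_lt_rpow (Real.sqrt_nonneg _) h1 (by linarith)
  have h3 : b ^ (1 - (1 - 1 / α)) * b ^ (1 - 1 / α) = b := by
    rw [← Real.rpow_add hb']; simp
  have h4 : 0 < b ^ (1 - 1 / α) := Real.rpow_pos_of_pos hb' _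
  have := mul_lt_mul_of_pos_right h2 h4
  linarith

lemma main_lt (hΦ : IsCPTP Φ) (α : ℝ) (hα : 1 / 2 ≤ α) (hα1 : α < 1) {P Q : Matrix n n ℂ}
    (hP : P.PosSemidef) (hQ : Q.PosSemidef) :
    (cp (sw ((1 - α) / (2 * α)) P Q) (α : ℂ)).trace.re ≤
      (cp (sw ((1 - α) / (2 * α)) (Φ P) (Φ Q)) (α : ℂ)).trace.re := by
  obtain ⟨X, hX⟩ := exists_sq hP
  have hαp : 0 < α := by linarith
  have hα0 : (α : ℂ) ≠ 0 := by exact_mod_cast (by linarith : α ≠ 0)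
  set s := (1 - α) / (2 * α) with hs
  have hsc : (s : ℂ) = (1 - α) / (2 * α) := by rw [hs]; push_cast; ring
  have hθ0 : 1 < 1 / α := by rw [lt_div_iff₀] <;> linarith
  have hθ1 : 1 / α ≤ 2 := by rw [div_le_iff₀] <;> linarith
  have key := interp hΦ α s hP hQ hX (1 / α - 1) ⟨by linarith, by linarith⟩
  have hA := sw_psd s hP Q
  have hB := sw_psd s (pos hΦ hP) (Φ Q)
  set A := sw s P Q with hAd
  set B := sw s (Φ P) (Φ Q) with hBd
  set R := X * cp Q (s : ℂ) * cp A ((α - 1 : ℝ) : ℂ) * cp Q (s : ℂ) with hR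
  have eX : Xz α s X A Q ((1 / α - 1 : ℝ) : ℂ) = R := by
    unfold Xz
    rw [mul_assoc _ (cp A _) (cp A _), cp_mul' _ (u := ((α - 1 : ℝ) : ℂ)), hR]
    · congr 2
      rw [hsc]; push_cast; field_simp
    · push_cast; field_simp; ring
  have eM : Mz α B (Φ Q) ((1 / α - 1 : ℝ) : ℂ)
      = cp (Φ Q) (-(s : ℂ)) * cp B (((1 - α) / 2 : ℝ) : ℂ) := by
    unfold Mz
    congr 2
    · rw [hsc]; push_cast; field_simp
    · push_cast; field_simp
  have hf : ((Nn α s B (Φ Q))ᴴ * Φ (Xᴴ * R) *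
      (cp (Φ Q) (-(s : ℂ)) * cp B (((1 - α) / 2 : ℝ) : ℂ))).trace = (cp A (α : ℂ)).trace := by
    have e1 : ((Nn α s B (Φ Q))ᴴ * Φ (Xᴴ * R) *
      (cp (Φ Q) (-(s : ℂ)) * cp B (((1 - α) / 2 : ℝ) : ℂ))).trace
      = (cp B 0 * cp (Φ Q) s * Φ (Xᴴ * R) * cp (Φ Q) (-(s : ℂ))).trace := by
      rw [← mul_assoc, Matrix.trace_mul_comm, Nn, Matrix.conjTranspose_mul, cp_real_conj,
        cp_real_conj, ← cp_mul' B (z := (((1 - α) / 2 : ℝ) : ℂ)) (w := (((α - 1) / 2 : ℝ) : ℂ))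
          (u := 0) (by push_cast; ring)]
      simp only [mul_assoc]
    have hB0 : (cp B 0)ᴴ = cp B 0 := by rw [cp_conj]; simp
    have z1 : ((1 - cp B 0) * cp (Φ Q) s * Φ (Xᴴ * R) * cp (Φ Q) (-(s : ℂ))).trace = 0 := by
      have := cp_cs hΦ X R (cp (Φ Q) s * (1 - cp B 0)) (cp (Φ Q) (-(s : ℂ)))
      have e : (cp (Φ Q) s * (1 - cp B 0))ᴴ * Φ (Xᴴ * X) * (cp (Φ Q) s * (1 - cp B 0))
          = (1 - cp B 0)ᴴ * (B * (1 - cp B 0)) := by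
        rw [Matrix.conjTranspose_mul, cp_real_conj, hX]
        generalize 1 - cp B 0 = G
        rw [hBd]
        simp only [sw, mul_assoc]
      rw [e, self_mul_sub hB, Matrix.conjTranspose_mul, cp_real_conj, Matrix.conjTranspose_sub, hB0,
        Matrix.conjTranspose_one] at this
      simp only [mul_zero, Matrix.trace_zero, Complex.zero_re, zero_mul] at this
      exact norm_eq_zero.mp (pow_eq_zero_iff (two_ne_zero) |>.mp (le_antisymm this (sq_nonneg _)))
    have e2 : (cp B 0 * cp (Φ Q) s * Φ (Xᴴ * R) * cp (Φ Q) (-(s : ℂ))).trace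
        = (Φ (Xᴴ * R) * cp (Φ Q) 0).trace := by
      simp only [sub_mul, one_mul, Matrix.trace_sub] at z1
      rw [← sub_eq_zero.mp z1, mul_assoc, Matrix.trace_mul_comm, mul_assoc,
        cp_mul' (Φ Q) (u := 0) (by ring)]
    have hRs : (Rᴴ * R) * (1 - cp Q 0) = 0 := by
      have : cp Q (s : ℂ) * (1 - cp Q 0) = 0 := by
        rw [mul_sub, mul_one, cp_mul, add_zero, sub_self]
      rw [mul_assoc, hR, mul_assoc _ (cp Q (s : ℂ)) (1 - cp Q 0), this, mul_zero, mul_zero]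
    have z2 : (Φ (Xᴴ * R) * (1 - cp (Φ Q) 0)).trace = 0 := by
      have := cp_cs hΦ X R 1 (1 - cp (Φ Q) 0)
      have hz := map_supp hΦ (Matrix.posSemidef_conjTranspose_mul_self R) hQ hRs
      rw [mul_assoc (1 - cp (Φ Q) 0)ᴴ, hz] at this
      simp only [mul_zero, Matrix.trace_zero, Complex.zero_re, Matrix.conjTranspose_one,
        one_mul] at this
      exact norm_eq_zero.mp (pow_eq_zero_iff (two_ne_zero) |>.mp (le_antisymm this (sq_nonneg _)))
    rw [mul_sub, mul_one, Matrix.trace_sub, sub_eq_zero] at z2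
    rw [e1, e2, ← z2, hΦ.2, hR]
    have e3 : Xᴴ * (X * cp Q (s : ℂ) * cp A ((α - 1 : ℝ) : ℂ) * cp Q (s : ℂ))
        = (P * cp Q (s : ℂ) * cp A ((α - 1 : ℝ) : ℂ)) * cp Q (s : ℂ) := by
      rw [← hX]; simp only [mul_assoc]
    have e4 : cp Q (s : ℂ) * (P * cp Q (s : ℂ) * cp A ((α - 1 : ℝ) : ℂ)) = cp A (α : ℂ) := by
      rw [← cp_mul' A (z := 1) (w := ((α - 1 : ℝ) : ℂ)) (u := (α : ℂ)) (by push_cast; ring),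
        cp_one hA]
      generalize cp A ((α - 1 : ℝ) : ℂ) = G
      rw [hAd]
      simp only [sw, mul_assoc]
    rw [e3, Matrix.trace_mul_comm, e4]
  rw [eX, eM, hf, re_trace_eq (cp_psd _ α), Complex.norm_real, Complex.ofReal_re] at key
  have hb := re_trace_nonneg (cp_psd B α)
  have ha := re_trace_nonneg (cp_psd A α)
  generalize (cp B (α : ℂ)).trace.re = b at *
  generalize (cp A (α : ℂ)).trace.re = a at *
  rw [Real.norm_of_nonneg ha] at key
  by_contra hab
  push Not at hab
  have ha' : 0 < a := lt_of_le_of_lt hb hab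
  have h1 : √(b * a) ≤ a := by
    rw [Real.sqrt_le_left ha]; nlinarith
  have h2 : √(b * a) ^ (1 - (1 / α - 1)) ≤ a ^ (1 - (1 / α - 1)) :=
    Real.rpow_le_rpow (Real.sqrt_nonneg _) h1 (by linarith)
  have h2' : b ^ (1 / α - 1) < a ^ (1 / α - 1) := Real.rpow_lt_rpow hb hab (by linarith)
  have h3 : a ^ (1 - (1 / α - 1)) * a ^ (1 / α - 1) = a := by
    rw [← Real.rpow_add ha']; simp
  have h4 : 0 < a ^ (1 - (1 / α - 1)) := Real.rpow_pos_of_pos ha' _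
  have := mul_le_mul_of_nonneg_right h2 (Real.rpow_nonneg hb (1 / α - 1))
  have := mul_lt_mul_of_pos_left h2' h4
  linarith

lemma sw_eq_zero {s : ℝ} {P Q : Matrix n n ℂ} (hP : P.PosSemidef) (h : sw s P Q = 0) (w : ℂ) :
    P * cp Q w = 0 := by
  obtain ⟨X, hX⟩ := exists_sq hP
  have e : sw s P Q = (X * cp Q (s : ℂ))ᴴ * (X * cp Q (s : ℂ)) := by
    rw [sw, ← hX, Matrix.conjTranspose_mul, cp_real_conj]; simp only [mul_assoc]
  rw [e, Matrix.conjTranspose_mul_self_eq_zero] at h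
  rw [← hX, ← cp_mul' Q (z := (s : ℂ)) (w := w - s) (by ring), mul_assoc, ← mul_assoc X, h,
    zero_mul, mul_zero]

end
end DPI

/-- Data processing inequality for the sandwiched Rényi relative entropy,
`α ∈ [1/2,1) ∪ (1,∞)`. -/
theorem Dtilde_data_processing {n m : Type*} [Fintype n] [DecidableEq n]
    [Fintype m] [DecidableEq m]
    (α : ℝ) (hα : α ∈ Set.Ico (1/2 : ℝ) 1 ∪ Set.Ioi 1)
    (Φ : Matrix n n ℂ →ₗ[ℂ] Matrix m m ℂ) (hΦ : IsCPTP Φ)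
    (P Q : Matrix n n ℂ) (hP : P.PosSemidef) (hQ : Q.PosSemidef)
    (hPtr : P.trace ≠ 0) :
    Dtilde α (Φ P) (Φ Q) ≤ Dtilde α P Q := by
  have hΦP := DPI.pos hΦ hP
  have hΦQ := DPI.pos hΦ hQ
  have htr : (Φ P).trace = P.trace := hΦ.2 P
  have hP0 : P ≠ 0 := fun h => hPtr (by rw [h, Matrix.trace_zero])
  have hΦP0 : Φ P ≠ 0 := fun h => hPtr (by rw [← htr, h, Matrix.trace_zero])
  have ht : 0 < P.trace.re := by
    refine lt_of_le_of_ne (DPI.re_trace_nonneg hP) fun h => hPtr ?_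
    rw [DPI.re_trace_eq hP, ← h, Complex.ofReal_zero]
  have hαp : 0 < α := by
    rcases hα with h | h
    · linarith [h.1]
    · linarith [Set.mem_Ioi.mp h]
  have hα1 : α ≠ 1 := by
    rcases hα with h | h
    · exact h.2.ne
    · exact (Set.mem_Ioi.mp h).ne'
  have hs0 : (1 - α) / (2 * α) ≠ 0 :=
    div_ne_zero (sub_ne_zero.mpr hα1.symm) (by positivity)
  have conv1 : (mpow (mpow Q ((1-α)/(2*α)) * P * mpow Q ((1-α)/(2*α))) α)
      = DPI.cp (DPI.sw ((1-α)/(2*α)) P Q) (α : ℂ) := by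
    rw [DPI.mpow_eq hQ _ hs0, ← DPI.sw.eq_def, DPI.mpow_eq (DPI.sw_psd _ hP Q) _ hαp.ne']
  have conv2 : (mpow (mpow (Φ Q) ((1-α)/(2*α)) * Φ P * mpow (Φ Q) ((1-α)/(2*α))) α)
      = DPI.cp (DPI.sw ((1-α)/(2*α)) (Φ P) (Φ Q)) (α : ℂ) := by
    rw [DPI.mpow_eq hΦQ _ hs0, ← DPI.sw.eq_def, DPI.mpow_eq (DPI.sw_psd _ hΦP _) _ hαp.ne']
  unfold Dtilde
  rw [conv1, conv2, htr, DPI.ker_iff hQ, DPI.ker_iff hΦQ]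
  by_cases hc : (α < 1 ∧ P * Q ≠ 0) ∨ P * (1 - DPI.cp Q 0) = 0
  swap
  · rw [if_neg hc]
    exact le_top
  rw [if_pos hc]
  rcases hα with hlt | hgt
  · have hle := DPI.main_lt hΦ α hlt.1 hlt.2 hP hQ
    have hA0 : DPI.sw ((1-α)/(2*α)) P Q ≠ 0 := by
      intro h0
      rcases hc with ⟨_, h⟩ | h
      · apply h
        have := DPI.sw_eq_zero hP h0 1
        rwa [DPI.cp_one hQ] at this
      · apply hP0
        have := DPI.sw_eq_zero hP h0 0
        rwa [mul_sub, mul_one, this, sub_zero] at h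
    have ha := DPI.cp_trace_pos (DPI.sw_psd _ hP Q) hA0 α
    have hc2 : Φ P * Φ Q ≠ 0 := by
      intro h0
      have hz : DPI.sw ((1-α)/(2*α)) (Φ P) (Φ Q) = 0 := by
        rw [DPI.sw, mul_assoc, ← DPI.cp_mul' (Φ Q) (z := 1)
          (w := (((1-α)/(2*α) : ℝ) : ℂ) - 1) (u := (((1-α)/(2*α) : ℝ) : ℂ)) (by ring),
          DPI.cp_one hΦQ, ← mul_assoc (Φ P), h0, zero_mul, mul_zero]
      rw [hz, DPI.cp_zero_mat, Matrix.trace_zero, Complex.zero_re] at hle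
      linarith
    rw [if_pos (Or.inl ⟨hlt.2, hc2⟩)]
    rw [EReal.coe_le_coe_iff]
    refine mul_le_mul_of_nonpos_left ?_ ?_
    · exact Real.logb_le_logb_of_le (by norm_num) (div_pos ha ht)
        (div_le_div_of_nonneg_right hle ht.le)
    · exact div_nonpos_of_nonneg_of_nonpos zero_le_one (by linarith [hlt.2])
  · have hgt' : 1 < α := hgt
    have hk : P * (1 - DPI.cp Q 0) = 0 := by
      rcases hc with h | h
      · linarith [h.1]
      · exact h
    have hk2 := DPI.map_supp hΦ hP hQ hk
    have hle := DPI.main_gt hΦ α hgt' hP hQ hk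
    have hB0 : DPI.sw ((1-α)/(2*α)) (Φ P) (Φ Q) ≠ 0 := by
      intro h0
      apply hΦP0
      have := DPI.sw_eq_zero hΦP h0 0
      rwa [mul_sub, mul_one, this, sub_zero] at hk2
    have hb := DPI.cp_trace_pos (DPI.sw_psd _ hΦP (Φ Q)) hB0 α
    rw [if_pos (Or.inr hk2)]
    rw [EReal.coe_le_coe_iff]
    refine mul_le_mul_of_nonneg_left ?_ ?_
    · exact Real.logb_le_logb_of_le (by norm_num) (div_pos hb ht)
        (div_le_div_of_nonneg_right hle ht.le)
    · exact div_nonneg zero_le_one (by linarith)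
end

section
/- If ρ_AB is a classical-quantum state (or quantum-classical state), then for α ∈ [1/2,1), H̃_α^↑(A|B)_ρ ≥ 0. -/
open Matrix MeasureTheory
open scoped Kronecker ComplexOrder

/-- `ρ_AB` is classical on `A` (block diagonal in the standard basis of `A`),
i.e. of the form `Σ_a p(a) |a⟩⟨a| ⊗ ρ_B^a`. -/
def ClassicalA {a b : Type*} (ρ : Matrix (a × b) (a × b) ℂ) : Prop :=
  ∀ p q : a × b, p.1 ≠ q.1 → ρ p q = 0

/-- `ρ_AB` is classical on `B`. -/
def ClassicalB {a b : Type*} (ρ : Matrix (a × b) (a × b) ℂ) : Prop :=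
  ∀ p q : a × b, p.2 ≠ q.2 → ρ p q = 0

section aux
open scoped MatrixOrder Matrix.Norms.L2Operator NNReal

theorem mpow_eq_cfc {n : Type*} [Fintype n] [DecidableEq n] {A : Matrix n n ℂ}
    (hA : A.IsHermitian) (p : ℝ) : mpow A p = cfc (fun x : ℝ => x ^ p) A := by
  rw [hA.cfc_eq, mpow, dif_pos hA, IsHermitian.cfc, Unitary.conjStarAlgAut_apply]
  rfl

theorem mpow_eq_nnrpow {n : Type*} [Fintype n] [DecidableEq n] {A : Matrix n n ℂ}
    (hA : 0 ≤ A) (p : ℝ≥0) (hp : 0 < p) : mpow A p = A ^ p := by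
  have h : A.IsHermitian := (nonneg_iff_posSemidef.mp hA).isHermitian
  rw [mpow_eq_cfc h, CFC.nnrpow_eq_rpow hp, CFC.rpow_eq_cfc_real hA]

theorem trace_mpow {n : Type*} [Fintype n] [DecidableEq n] {A : Matrix n n ℂ}
    (hA : A.IsHermitian) (p : ℝ) :
    (mpow A p).trace = (A.charpoly.roots.map (fun z : ℂ => ((z.re ^ p : ℝ) : ℂ))).sum := by
  rw [hA.roots_charpoly_eq_eigenvalues, mpow, dif_pos hA, Matrix.trace_mul_comm, ← mul_assoc]
  simp [Matrix.trace, Multiset.map_map, Function.comp_def]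

theorem trace_mpow_comm {n : Type*} [Fintype n] [DecidableEq n] (X : Matrix n n ℂ) (p : ℝ) :
    (mpow (Xᴴ * X) p).trace = (mpow (X * Xᴴ) p).trace := by
  rw [trace_mpow (isHermitian_conjTranspose_mul_self X),
    trace_mpow (isHermitian_mul_conjTranspose_self X), Matrix.charpoly_mul_comm]

def kronHom (a b : Type*) [Fintype a] [DecidableEq a] [Fintype b] [DecidableEq b] :
    Matrix b b ℂ →⋆ₐ[ℂ] Matrix (a × b) (a × b) ℂ where
  toFun X := (1 : Matrix a a ℂ) ⊗ₖ X
  map_one' := by simp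
  map_mul' X Y := by rw [← Matrix.mul_kronecker_mul, one_mul]
  map_zero' := by simp
  map_add' X Y := by rw [Matrix.kronecker_add]
  commutes' r := by
    rw [Algebra.algebraMap_eq_smul_one, Algebra.algebraMap_eq_smul_one, Matrix.kronecker_smul]
    simp
  map_star' X := by
    simp [Matrix.star_eq_conjTranspose, Matrix.conjTranspose_kronecker]

theorem kron_nonneg {a b : Type*} [Fintype a] [DecidableEq a] [Fintype b] [DecidableEq b]
    {X : Matrix b b ℂ} (hX : 0 ≤ X) : 0 ≤ (1 : Matrix a a ℂ) ⊗ₖ X :=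
  nonneg_iff_posSemidef.mpr (PosSemidef.one.kronecker (nonneg_iff_posSemidef.mp hX))

theorem kron_mpow {a b : Type*} [Fintype a] [DecidableEq a] [Fintype b] [DecidableEq b]
    {X : Matrix b b ℂ} (hX : 0 ≤ X) (p : ℝ≥0) (hp : 0 < p) :
    (1 : Matrix a a ℂ) ⊗ₖ mpow X p = ((1 : Matrix a a ℂ) ⊗ₖ X) ^ p := by
  have h : X.IsHermitian := (nonneg_iff_posSemidef.mp hX).isHermitian
  have hk := kron_nonneg (a := a) hX
  have h' : ((1 : Matrix a a ℂ) ⊗ₖ X).IsHermitian := (nonneg_iff_posSemidef.mp hk).isHermitian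
  rw [← mpow_eq_nnrpow hk p hp, mpow_eq_cfc h, mpow_eq_cfc h']
  have hc : Continuous (kronHom a b) :=
    LinearMap.continuous_of_finiteDimensional (kronHom a b).toAlgHom.toLinearMap
  have hcont : ContinuousOn (fun x : ℝ => x ^ (p : ℝ)) (spectrum ℝ X) :=
    (Real.continuous_rpow_const (by positivity)).continuousOn
  exact StarAlgHom.map_cfc (R := ℝ) (S := ℂ) (kronHom a b) (fun x : ℝ => x ^ (p : ℝ)) X
    hcont hc h.isSelfAdjoint h'.isSelfAdjoint

theorem sandTr_ge_one {a b : Type*} [Fintype a] [DecidableEq a] [Fintype b] [DecidableEq b]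
    (α : ℝ) (hα : α ∈ Set.Ico (1/2 : ℝ) 1)
    (ρ : Matrix (a × b) (a × b) ℂ) (hρ : IsDensity ρ) (η : Matrix b b ℂ) (hη : 0 ≤ η)
    (hle : ρ ≤ (1 : Matrix a a ℂ) ⊗ₖ η) : 1 ≤ sandTr α ρ η := by
  obtain ⟨h1, h2⟩ := hα
  have hα0 : 0 < α := by linarith
  have hρ0 : 0 ≤ ρ := nonneg_iff_posSemidef.mpr hρ.1
  obtain ⟨q, hq⟩ : ∃ q : ℝ≥0, (q : ℝ) = (1 - α)/(2*α) :=
    ⟨⟨_, div_nonneg (by linarith) (by linarith)⟩, rfl⟩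
  obtain ⟨β, hβ⟩ : ∃ β : ℝ≥0, (β : ℝ) = α := ⟨⟨_, hα0.le⟩, rfl⟩
  have hβ0 : 0 < β := by rw [← NNReal.coe_pos, hβ]; exact hα0
  have hq0 : 0 < q := by
    rw [← NNReal.coe_pos, hq]; exact div_pos (by linarith) (by linarith)
  have hq1 : q + q ≤ 1 := by
    rw [← NNReal.coe_le_coe]; push_cast; rw [hq]
    rw [← add_div, div_le_one (by linarith)]; linarith
  have hmul : (1/2 + (q + q) + 1/2) * β = 1 := by
    rw [← NNReal.coe_inj]; push_cast; rw [hq, hβ]; field_simp; ring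
  unfold sandTr
  rw [← hq, kron_mpow hη q hq0]
  set K := (1 : Matrix a a ℂ) ⊗ₖ η with hK
  set S := ρ ^ (1/2 : ℝ≥0) with hS
  have hSS : S * S = ρ := by
    rw [hS, ← CFC.nnrpow_add (by norm_num) (by norm_num), add_halves, CFC.nnrpow_one ρ]
  have hSh : Sᴴ = S := (nonneg_iff_posSemidef.mp (CFC.nnrpow_nonneg)).isHermitian
  have hKh : (K ^ q)ᴴ = K ^ q := (nonneg_iff_posSemidef.mp (CFC.nnrpow_nonneg)).isHermitian
  have e1 : K ^ q * ρ * K ^ q = (S * K ^ q)ᴴ * (S * K ^ q) := by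
    rw [conjTranspose_mul, hSh, hKh, ← hSS]; simp only [mul_assoc]
  have e2 : (S * K ^ q) * (S * K ^ q)ᴴ = S * K ^ (q + q) * S := by
    rw [conjTranspose_mul, hSh, hKh, CFC.nnrpow_add hq0 hq0]; simp only [mul_assoc]
  rw [e1, trace_mpow_comm, e2]
  have hmono : ρ ^ (q + q) ≤ K ^ (q + q) := CFC.nnrpow_le_nnrpow ⟨zero_le, hq1⟩ hle
  have hconj : S * ρ ^ (q + q) * S ≤ S * K ^ (q + q) * S := by
    have := star_left_conjugate_le_conjugate hmono S
    rwa [Matrix.star_eq_conjTranspose, hSh] at this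
  have e3 : S * ρ ^ (q + q) * S = ρ ^ (1/2 + (q + q) + 1/2) := by
    rw [CFC.nnrpow_add (x := 1/2 + (q + q)) (y := 1/2) (by positivity) (by norm_num),
      CFC.nnrpow_add (x := 1/2) (y := q + q) (by norm_num) (by positivity)]
  rw [e3] at hconj
  have hnn : 0 ≤ S * K ^ (q + q) * S := le_trans CFC.nnrpow_nonneg hconj
  have hfin := CFC.nnrpow_le_nnrpow (p := β) ⟨zero_le, by
    rw [← NNReal.coe_le_coe, hβ]; exact h2.le⟩ hconj
  rw [CFC.nnrpow_nnrpow, hmul, CFC.nnrpow_one ρ] at hfin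
  rw [← hβ, mpow_eq_nnrpow hnn β hβ0]
  have ht := (Matrix.le_iff.mp hfin).trace_nonneg
  rw [Matrix.trace_sub, hρ.2] at ht
  have := (Complex.le_def.mp ht).1
  simpa using this

def margB {a b : Type*} [Fintype a] (ρ : Matrix (a × b) (a × b) ℂ) : Matrix b b ℂ :=
  ∑ i, ρ.submatrix (fun j => (i, j)) (fun j => (i, j))

theorem margB_density {a b : Type*} [Fintype a] [DecidableEq a] [Fintype b] [DecidableEq b]
    (ρ : Matrix (a × b) (a × b) ℂ) (hρ : IsDensity ρ) : IsDensity (margB ρ) := by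
  refine ⟨posSemidef_sum _ fun i _ => hρ.1.submatrix _, ?_⟩
  rw [← hρ.2, margB, Matrix.trace_sum]
  simp [Matrix.trace, Fintype.sum_prod_type]

theorem le_trace_smul {n : Type*} [Fintype n] [DecidableEq n] (M : Matrix n n ℂ)
    (hM : M.PosSemidef) : M ≤ M.trace • (1 : Matrix n n ℂ) := by
  have h := hM.isHermitian
  have ht : M.trace • (1 : Matrix n n ℂ) =
      algebraMap ℝ (Matrix n n ℂ) (∑ i, h.eigenvalues i) := by
    rw [h.trace_eq_sum_eigenvalues, Algebra.algebraMap_eq_smul_one]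
    ext i j
    simp [Matrix.smul_apply]
  rw [ht]
  refine le_algebraMap_of_spectrum_le ?_ h.isSelfAdjoint
  intro x hx
  rw [h.spectrum_real_eq_range_eigenvalues] at hx
  obtain ⟨i, rfl⟩ := hx
  exact Finset.single_le_sum (fun j _ => hM.eigenvalues_nonneg j) (Finset.mem_univ i)

theorem proj_psd {n : Type*} [Fintype n] [DecidableEq n] (i : n) :
    (Matrix.diagonal (Pi.single i (1 : ℂ)) : Matrix n n ℂ).PosSemidef := by
  refine PosSemidef.diagonal ?_
  intro j
  by_cases h : j = i
  · subst h; simp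
  · simp [h]

theorem le_of_classicalA {a b : Type*} [Fintype a] [DecidableEq a] [Fintype b] [DecidableEq b]
    (ρ : Matrix (a × b) (a × b) ℂ) (hρ : IsDensity ρ) (h : ClassicalA ρ) :
    ρ ≤ (1 : Matrix a a ℂ) ⊗ₖ margB ρ := by
  rw [Matrix.le_iff]
  have e : (1 : Matrix a a ℂ) ⊗ₖ margB ρ - ρ = ∑ i : a, Matrix.diagonal (Pi.single i (1 : ℂ)) ⊗ₖ
      (∑ k ∈ Finset.univ.erase i, ρ.submatrix (fun j => (k, j)) (fun j => (k, j))) := by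
    ext ⟨i, j⟩ ⟨i', j'⟩
    simp only [Matrix.sub_apply, Matrix.sum_apply, Matrix.kroneckerMap_apply, margB,
      Matrix.submatrix_apply]
    by_cases hi : i = i'
    · subst hi
      simp only [Matrix.one_apply_eq, Matrix.diagonal_apply_eq, one_mul, Pi.single_apply, ite_mul,
        zero_mul, Finset.sum_ite_eq, Finset.mem_univ, if_true]
      rw [← Finset.add_sum_erase _ _ (Finset.mem_univ i)]
      ring
    · simp [hi, h (i, j) (i', j') hi]
  rw [e]
  exact posSemidef_sum _ fun i _ => (proj_psd i).kronecker
    (posSemidef_sum _ fun k _ => hρ.1.submatrix _)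

theorem le_of_classicalB {a b : Type*} [Fintype a] [DecidableEq a] [Fintype b] [DecidableEq b]
    (ρ : Matrix (a × b) (a × b) ℂ) (hρ : IsDensity ρ) (h : ClassicalB ρ) :
    ρ ≤ (1 : Matrix a a ℂ) ⊗ₖ margB ρ := by
  rw [Matrix.le_iff]
  have e : (1 : Matrix a a ℂ) ⊗ₖ margB ρ - ρ = ∑ j : b,
      ((ρ.submatrix (fun i => (i, j)) (fun i => (i, j))).trace • (1 : Matrix a a ℂ)
        - ρ.submatrix (fun i => (i, j)) (fun i => (i, j))) ⊗ₖ
      Matrix.diagonal (Pi.single j (1 : ℂ)) := by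
    ext ⟨i, j⟩ ⟨i', j'⟩
    simp only [Matrix.sub_apply, Matrix.sum_apply, Matrix.kroneckerMap_apply, margB,
      Matrix.submatrix_apply, Matrix.smul_apply, Matrix.trace, Matrix.diag_apply]
    by_cases hj : j = j'
    · subst hj
      simp [Matrix.diagonal_apply_eq, Pi.single_apply, mul_comm]
    · have : ∀ k, ρ (k, j) (k, j') = 0 := fun k => h (k, j) (k, j') hj
      simp [hj, h (i, j) (i', j') hj, this]
  rw [e]
  exact posSemidef_sum _ fun j _ =>
    (Matrix.le_iff.mp (le_trace_smul _ (hρ.1.submatrix _))).kronecker (proj_psd j)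

end aux

/-- For classical-quantum or quantum-classical states, the sandwiched Rényi conditional
entropy is nonnegative for `α ∈ [1/2,1)`. -/
theorem Hcond_nonneg_classical {dA dB : ℕ}
    (α : ℝ) (hα : α ∈ Set.Ico (1/2 : ℝ) 1)
    (ρ : Matrix (Fin dA × Fin dB) (Fin dA × Fin dB) ℂ) (hρ : IsDensity ρ)
    (hcl : ClassicalA ρ ∨ ClassicalB ρ) :
    0 ≤ Hcond α ρ := by
  have hη := margB_density ρ hρ
  refine Real.iSup_nonneg' ⟨⟨margB ρ, hη⟩, ?_⟩
  refine mul_nonneg (one_div_nonneg.mpr (by linarith [hα.2])) ?_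
  refine Real.logb_nonneg (by norm_num) ?_
  refine sandTr_ge_one α hα ρ hρ _ (nonneg_iff_posSemidef.mpr hη.1) ?_
  rcases hcl with h | h
  · exact le_of_classicalA ρ hρ h
  · exact le_of_classicalB ρ hρ h
end
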